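/- arXiv:2411.14609 — 4 statements merged into one kernel-verified Lean document; each statement's English description precedes it below -/
import Mathlib

section
/- Let A be a rooted directed tree and λ a weight such that B_λ is a bounded hypercyclic operator on c₀(A). Then B_λ supports a dense, countably generated, free hypercyclic algebra with respect to the coordinatewise product. -/
open Filter Topology
open scoped ENNReal NNReal

/-- A rooted directed tree on a vertex set `A`: a root, a parent map (with the convention
`par root = root`), such that every vertex reaches the root after finitely many steps.
This is equivalent to a connected acyclic directed graph in which every vertex other than
the root has exactly one parent and the root has none. -/
structure DirTree (A : Type*) where
  root : A
  par : A → A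
  par_root : par root = root
  reaches : ∀ v, ∃ n, par^[n] v = root

namespace DirTree
variable {A : Type*} (T : DirTree A)

/-- The set of children of a vertex. -/
def chi (v : A) : Set A := {u | u ≠ T.root ∧ T.par u = v}

/-- `chiIter n v = Chi^n(v)`, the set of `n`-th descendants of `v`. -/
def chiIter : ℕ → A → Set A
  | 0, v => {v}
  | n + 1, v => ⋃ u ∈ chiIter n v, T.chi u

/-- For `u ∈ Chi^n(v)`, `wt lam n u = λ(v → u) = ∏_{k<n} λ_{Par^k(u)}`. -/
def wt (lam : A → ℂ) (n : ℕ) (u : A) : ℂ :=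
  ∏ k ∈ Finset.range n, lam (T.par^[k] u)

/-- `B` is the weighted backward shift with weight `lam` on `ℓ^p(A)`:
`(B f)(v) = ∑_{u ∈ Chi(v)} λ_u f(u)`. -/
def IsWBS (lam : A → ℂ) {p : ℝ≥0∞} [Fact (1 ≤ p)]
    (B : lp (fun _ : A => ℂ) p →L[ℂ] lp (fun _ : A => ℂ) p) : Prop :=
  ∀ f : lp (fun _ : A => ℂ) p, ∀ v : A,
    (B f : ∀ _ : A, ℂ) v = ∑' u : T.chi v, lam u * (f : ∀ _ : A, ℂ) u

end DirTree

open scoped ZeroAtInfty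

section FiniteSupport

variable {A : Type*} [TopologicalSpace A]

theorem C0_norm_le {f : C₀(A, ℂ)} {C : ℝ} (hC : 0 ≤ C) : ‖f‖ ≤ C ↔ ∀ v, ‖f v‖ ≤ C := by
  rw [← ZeroAtInftyContinuousMap.norm_toBCF_eq_norm, BoundedContinuousFunction.norm_le hC]
  rfl

theorem C0_norm_apply_le (f : C₀(A, ℂ)) (v : A) : ‖f v‖ ≤ ‖f‖ :=
  (C0_norm_le (norm_nonneg f)).1 le_rfl v

theorem C0_sum_apply {ι : Type*} (s : Finset ι) (F : ι → C₀(A, ℂ)) (v : A) :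
    (∑ i ∈ s, F i) v = ∑ i ∈ s, F i v := by
  classical
  induction s using Finset.induction_on with
  | empty => simp
  | insert a s ha ih => simp [Finset.sum_insert ha, ih]

variable [DiscreteTopology A]

open Classical in
/-- The function in `C₀(A, ℂ)` that agrees with `φ` on the finite set `S` and vanishes elsewhere. -/
noncomputable def finiteRestrict (S : Finset A) (φ : A → ℂ) : C₀(A, ℂ) where
  toFun v := if v ∈ S then φ v else 0
  continuous_toFun := continuous_of_discreteTopology
  zero_at_infty' := by
    rw [cocompact_eq_cofinite]
    refine tendsto_nhds_of_eventually_eq ?_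
    filter_upwards [S.finite_toSet.compl_mem_cofinite] with v hv
    exact if_neg hv

open Classical in
theorem finiteRestrict_apply (S : Finset A) (φ : A → ℂ) (v : A) :
    finiteRestrict S φ v = if v ∈ S then φ v else 0 := rfl

theorem exists_finiteRestrict_near (f : C₀(A, ℂ)) {r : ℝ} (hr : 0 < r) :
    ∃ S : Finset A, ‖finiteRestrict S f - f‖ < r := by
  have hfin : {v | ¬ ‖f v‖ < r / 2}.Finite := by
    have h := f.zero_at_infty'
    rw [cocompact_eq_cofinite] at h
    have h' := h.norm.eventually_lt_const (u := r / 2) (by simpa using half_pos hr)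
    exact h'
  refine ⟨hfin.toFinset, lt_of_le_of_lt ?_ (half_lt_self hr)⟩
  rw [C0_norm_le (half_pos hr).le]
  intro v
  rw [ZeroAtInftyContinuousMap.sub_apply, finiteRestrict_apply]
  split_ifs with h
  · simpa using (half_pos hr).le
  · simp only [Set.Finite.mem_toFinset, Set.mem_ofPred_eq, not_not] at h
    simpa using h.le

end FiniteSupport

namespace DirTree

variable {A : Type*} (T : DirTree A)

open Classical in
/-- The path weight `λ(par^n u → u)`, set to zero when `u` has depth less than `n`. -/
noncomputable def coef (lam : A → ℂ) (n : ℕ) (u : A) : ℂ :=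
  T.wt (fun u => if u = T.root then 0 else lam u) n u

open Classical in
theorem coef_succ (lam : A → ℂ) (n : ℕ) (u : A) :
    T.coef lam (n + 1) u =
      (if u = T.root then 0 else lam u) * T.coef lam n (T.par u) := by
  simp only [coef, wt, Finset.prod_range_succ', Function.iterate_succ_apply,
    Function.iterate_zero_apply, mul_comm]
  rfl

theorem eventually_coef_eq_zero (lam : A → ℂ) (S : Finset A) :
    ∀ᶠ n in atTop, ∀ u ∈ S, T.coef lam n u = 0 := by
  rw [Filter.eventually_all_finset]
  intro u _
  obtain ⟨N, hN⟩ := T.reaches u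
  filter_upwards [eventually_gt_atTop N] with n hn
  exact Finset.prod_eq_zero (Finset.mem_range.2 hn) (if_pos hN)

variable [TopologicalSpace A] [DiscreteTopology A] {T} {lam : A → ℂ}
  {B : C₀(A, ℂ) →L[ℂ] C₀(A, ℂ)}

open Classical in
theorem apply_finiteRestrict_singleton
    (hB : ∀ (f : C₀(A, ℂ)) (v : A), B f v = ∑' u : T.chi v, lam u * f u) (u : A) :
    B (finiteRestrict {u} 1) =
      (if u = T.root then 0 else lam u) • finiteRestrict {T.par u} 1 := by
  ext v
  rw [hB, ZeroAtInftyContinuousMap.smul_apply, finiteRestrict_apply]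
  by_cases hu : u ∈ T.chi v
  · rw [tsum_eq_single (⟨u, hu⟩ : T.chi v)]
    · simp [finiteRestrict_apply, hu.1, hu.2]
    · rintro ⟨w, hw⟩ hne
      have : w ≠ u := fun h => hne (Subtype.ext h)
      simp [finiteRestrict_apply, this]
  · have : ∀ w : T.chi v, (w : A) ≠ u := fun w h => hu (h ▸ w.2)
    simp only [finiteRestrict_apply, Finset.mem_singleton, this, if_false, mul_zero, tsum_zero]
    by_cases hr : u = T.root
    · simp [hr]
    · have : v ≠ T.par u := fun h => hu ⟨hr, h.symm⟩
      simp [this]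

theorem pow_apply_finiteRestrict_singleton
    (hB : ∀ (f : C₀(A, ℂ)) (v : A), B f v = ∑' u : T.chi v, lam u * f u) (n : ℕ) (u : A) :
    (B ^ n) (finiteRestrict {u} 1) = T.coef lam n u • finiteRestrict {T.par^[n] u} 1 := by
  induction n generalizing u with
  | zero => simp [coef, wt]
  | succ n ih =>
    rw [pow_succ, mul_apply_eq_comp, apply_finiteRestrict_singleton hB, map_smul, ih,
      coef_succ, smul_smul, Function.iterate_succ_apply]

open Classical in
theorem pow_apply_of_support_subset
    (hB : ∀ (f : C₀(A, ℂ)) (v : A), B f v = ∑' u : T.chi v, lam u * f u)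
    {S : Finset A} {f : C₀(A, ℂ)} (hf : ∀ u ∉ S, f u = 0) (n : ℕ) (v : A) :
    (B ^ n) f v = ∑ u ∈ S with T.par^[n] u = v, T.coef lam n u * f u := by
  have hsum : f = ∑ u ∈ S, f u • finiteRestrict {u} 1 := by
    ext w
    rw [C0_sum_apply]
    by_cases hw : w ∈ S
    · simp [finiteRestrict_apply, hw]
    · simp [finiteRestrict_apply, hw, hf]
  conv_lhs => rw [hsum]
  rw [map_sum, C0_sum_apply, Finset.sum_filter]
  refine Finset.sum_congr rfl fun u _ => ?_
  rw [map_smul, pow_apply_finiteRestrict_singleton hB]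
  by_cases h : T.par^[n] u = v
  · simp [finiteRestrict_apply, h, mul_comm]
  · simp [finiteRestrict_apply, h, Ne.symm h]

open Classical in
theorem exists_large_coef_sum
    (hB : ∀ (f : C₀(A, ℂ)) (v : A), B f v = ∑' u : T.chi v, lam u * f u)
    (hhc : ∃ f : C₀(A, ℂ), Dense (Set.range fun n : ℕ => (B ^ n) f))
    (F : Finset A) (K : ℝ) (N : ℕ) :
    ∃ n ≥ N, ∀ v ∈ F, ∃ G : Finset A,
      (∀ u ∈ G, T.par^[n] u = v) ∧ K ≤ ∑ u ∈ G, ‖T.coef lam n u‖ := by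
  obtain ⟨f, hf⟩ := hhc
  have hne : finiteRestrict {T.root} 1 ≠ (0 : C₀(A, ℂ)) := fun h => by
    simpa [finiteRestrict_apply] using DFunLike.congr_fun h T.root
  have : Nontrivial C₀(A, ℂ) := ⟨_, _, hne⟩
  have := fun x : C₀(A, ℂ) => Module.punctured_nhds_neBot ℂ C₀(A, ℂ) x
  have htail := hf.sdiff_finite ((Finset.range N).finite_toSet.image fun n => (B ^ n) f)
  set L := ‖f‖ + 1
  have hL : 0 < L := by positivity
  set t : C₀(A, ℂ) := finiteRestrict F fun _ => ((K * L + 1 : ℝ) : ℂ)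
  obtain ⟨_, ⟨⟨n, rfl⟩, hnN⟩, hn⟩ := htail.exists_dist_lt t one_pos
  refine ⟨n, ?_, fun v hv => ?_⟩
  · by_contra h
    exact hnN ⟨n, by simpa using h, rfl⟩
  have hcont : ∀ᶠ h in 𝓝 f, dist t ((B ^ n) h) < 1 :=
    (continuous_const.dist (B ^ n).continuous).continuousAt.eventually_lt_const hn
  obtain ⟨r, hr, hball⟩ := Metric.eventually_nhds_iff.1 hcont
  obtain ⟨S, hS⟩ := exists_finiteRestrict_near f (lt_min hr one_pos)
  set h := finiteRestrict S f
  have hclose : ‖t - (B ^ n) h‖ < 1 := by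
    rw [← dist_eq_norm]
    exact hball (by rw [dist_eq_norm]; exact hS.trans_le (min_le_left _ _))
  have hnorm : ‖h‖ ≤ L := by
    have := norm_le_norm_add_norm_sub' h f
    have := hS.le.trans (min_le_right _ _)
    linarith
  have hsupp : ∀ u ∉ S, h u = 0 := fun u hu => if_neg hu
  refine ⟨S.filter fun u => T.par^[n] u = v, fun u hu => (Finset.mem_filter.1 hu).2, ?_⟩
  have hub : ‖(B ^ n) h v‖ ≤ (∑ u ∈ S with T.par^[n] u = v, ‖T.coef lam n u‖) * L := by
    rw [pow_apply_of_support_subset hB hsupp, Finset.sum_mul]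
    refine norm_sum_le_of_le _ fun u _ => ?_
    rw [norm_mul]
    gcongr
    exact (C0_norm_apply_le h u).trans hnorm
  have htv : t v = ((K * L + 1 : ℝ) : ℂ) := if_pos hv
  have h1 : ‖t v - (B ^ n) h v‖ < 1 :=
    (C0_norm_apply_le (t - (B ^ n) h) v).trans_lt hclose
  have h2 := norm_le_norm_add_norm_sub' (t v) ((B ^ n) h v)
  have h3 : K * L + 1 ≤ ‖t v‖ := by
    rw [htv, Complex.norm_real]; exact le_abs_self _
  nlinarith

open Classical in
theorem exists_small_preimage
    (hB : ∀ (f : C₀(A, ℂ)) (v : A), B f v = ∑' u : T.chi v, lam u * f u)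
    (hhc : ∃ f : C₀(A, ℂ), Dense (Set.range fun n : ℕ => (B ^ n) f))
    {F : Finset A} {y : A → ℂ} (hy : ∀ v ∉ F, y v = 0) {δ : ℝ} (hδ : 0 < δ) (N : ℕ) :
    ∃ n ≥ N, ∃ (G : Finset A) (z : A → ℂ), (∀ u ∉ G, z u = 0) ∧ (∀ u, ‖z u‖ ≤ δ) ∧
      ∀ v, ∑ u ∈ G with T.par^[n] u = v, T.coef lam n u * z u = y v ∧
        ∑ u ∈ G with T.par^[n] u = v, ‖T.coef lam n u * z u‖ = ‖y v‖ := by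
  set C := ∑ v ∈ F, ‖y v‖
  have hC : 0 ≤ C := Finset.sum_nonneg fun _ _ => norm_nonneg _
  have hyC : ∀ v, ‖y v‖ ≤ C := fun v => by
    by_cases hv : v ∈ F
    · exact Finset.single_le_sum (f := fun v => ‖y v‖) (fun _ _ => norm_nonneg _) hv
    · simpa [hy v hv] using hC
  obtain ⟨n, hn, hG⟩ := exists_large_coef_sum hB hhc F ((C + 1) / δ) N
  choose! G hGv hGs using hG
  set s : A → ℝ := fun v => ∑ u ∈ G v, ‖T.coef lam n u‖
  have hs : ∀ v ∈ F, 0 < s v := fun v hv => lt_of_lt_of_le (by positivity) (hGs v hv)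
  set z : A → ℂ := fun u =>
    if u ∈ F.biUnion G then
      y (T.par^[n] u) * (starRingEnd ℂ (T.coef lam n u) / (‖T.coef lam n u‖ * s (T.par^[n] u)))
    else 0 with hz
  have hmem : ∀ u ∈ F.biUnion G, T.par^[n] u ∈ F := fun u hu => by
    obtain ⟨v, hv, huv⟩ := Finset.mem_biUnion.1 hu
    rwa [hGv v hv u huv]
  have hmul : ∀ v ∈ F, ∀ u ∈ G v,
      T.coef lam n u * z u = y v / s v * (‖T.coef lam n u‖ : ℂ) := fun v hv u hu => by
    simp only [hz, if_pos (Finset.mem_biUnion.2 ⟨v, hv, hu⟩), hGv v hv u hu]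
    have hsv : (s v : ℂ) ≠ 0 := by exact_mod_cast (hs v hv).ne'
    by_cases h0 : T.coef lam n u = 0
    · simp [h0]
    have h1 : (‖T.coef lam n u‖ : ℂ) ≠ 0 := by exact_mod_cast norm_ne_zero_iff.2 h0
    have h2 := Complex.mul_conj' (T.coef lam n u)
    field_simp
    linear_combination (y v) * h2
  have hfilter : ∀ v ∈ F, (F.biUnion G).filter (fun u => T.par^[n] u = v) = G v := by
    intro v hv
    ext u
    simp only [Finset.mem_filter, Finset.mem_biUnion]
    constructor
    · rintro ⟨⟨w, hw, hu⟩, rfl⟩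
      rwa [hGv w hw u hu]
    · exact fun hu => ⟨⟨v, hv, hu⟩, hGv v hv u hu⟩
  refine ⟨n, hn, F.biUnion G, z, fun u hu => if_neg hu, fun u => ?_, fun v => ?_⟩
  · by_cases hu : u ∈ F.biUnion G
    · have hp := hmem u hu
      simp only [hz, if_pos hu, norm_mul, norm_div, RCLike.norm_conj, Complex.norm_real, norm_norm]
      rw [← div_div, Real.norm_of_nonneg (hs _ hp).le]
      have h1 := hGs _ hp
      calc _ ≤ C * (1 / s (T.par^[n] u)) := by
            gcongr
            · exact hyC _
            · exact div_self_le_one _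
        _ ≤ δ := by
            rw [mul_one_div, div_le_iff₀ (hs _ hp)]
            rw [div_le_iff₀ hδ] at h1
            linarith
    · simpa only [hz, if_neg hu, norm_zero] using hδ.le
  · by_cases hv : v ∈ F
    · rw [hfilter v hv]
      have hsv : s v ≠ 0 := (hs v hv).ne'
      constructor
      · rw [Finset.sum_congr rfl (hmul v hv), ← Finset.mul_sum, ← Complex.ofReal_sum]
        exact div_mul_cancel₀ _ (by exact_mod_cast hsv)
      · rw [Finset.sum_congr rfl fun u hu => congrArg norm (hmul v hv u hu)]
        simp only [norm_mul, norm_div, Complex.norm_real, norm_norm]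
        rw [← Finset.mul_sum, Real.norm_of_nonneg (hs v hv).le]
        exact div_mul_cancel₀ _ hsv
    · have : (F.biUnion G).filter (fun u => T.par^[n] u = v) = ∅ :=
        Finset.filter_eq_empty_iff.2 fun u hu h => hv (h ▸ hmem u hu)
      simp [this, hy v hv]

end DirTree

section Monomials

/-- Finitely many multi-indices are separated by some positive weight, which therefore attains its
minimum over them exactly once. -/
theorem exists_weight_unique_min {I : Finset (ℕ →₀ ℕ)} (hI : I.Nonempty) :
    ∃ w : ℕ → ℕ, (∀ i, 0 < w i) ∧ ∃ a ∈ I, ∀ b ∈ I, b ≠ a →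
      (∑ i ∈ a.support, w i * a i) < ∑ i ∈ b.support, w i * b i := by
  classical
  let P : (ℕ →₀ ℕ) → Polynomial ℤ := fun a => ∑ i ∈ a.support, Polynomial.monomial i (a i : ℤ)
  have hcoeff : ∀ a i, (P a).coeff i = a i := fun a i => by
    simp only [P, Polynomial.finsetSum_coeff, Polynomial.coeff_monomial, Finset.sum_ite_eq',
      Finsupp.mem_support_iff, ite_not, ite_eq_right_iff]
    exact fun h => by rw [h, Nat.cast_zero]
  have hinj : Function.Injective P := fun a b h => by
    ext i
    have := congrArg (fun p => Polynomial.coeff p i) h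
    simpa only [hcoeff, Nat.cast_inj] using this
  have hQ : ∏ p ∈ I.offDiag, (P p.1 - P p.2) ≠ 0 :=
    Finset.prod_ne_zero_iff.2 fun p hp =>
      sub_ne_zero.2 fun h => (Finset.mem_offDiag.1 hp).2.2 (hinj h)
  obtain ⟨M, hM⟩ := Polynomial.exists_max_root _ hQ
  set D : ℕ := M.toNat + 1
  have hroot : ∀ a ∈ I, ∀ b ∈ I, a ≠ b → (P a).eval (D : ℤ) ≠ (P b).eval (D : ℤ) := by
    intro a ha b hb hab h
    have : (D : ℤ) ≤ M := hM _ <| by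
      rw [Polynomial.IsRoot, Polynomial.eval_prod]
      exact Finset.prod_eq_zero (Finset.mem_offDiag.2 ⟨ha, hb, hab⟩ : (a, b) ∈ I.offDiag)
        (by simp [h])
    omega
  have heval : ∀ a, (P a).eval (D : ℤ) = ((∑ i ∈ a.support, D ^ i * a i : ℕ) : ℤ) := fun a => by
    simp [P, Polynomial.eval_finsetSum, mul_comm]
  refine ⟨fun i => D ^ i, fun i => by positivity, ?_⟩
  obtain ⟨a, ha, hmin⟩ := I.exists_min_image (fun a => ∑ i ∈ a.support, D ^ i * a i) hI
  refine ⟨a, ha, fun b hb hba => lt_of_le_of_ne (hmin b hb) fun h => hroot b hb a ha hba ?_⟩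
  rw [heval, heval, h]

variable {A : Type*} [TopologicalSpace A]

/-- The monomial `∏ i, (g i) ^ (a i)` of positive degree in a sequence `g` in `C₀(A, ℂ)`. -/
noncomputable def C0Monomial (g : ℕ → C₀(A, ℂ)) (a : {a : ℕ →₀ ℕ // a ≠ 0}) : C₀(A, ℂ) where
  toFun v := ∏ i ∈ a.1.support, g i v ^ a.1 i
  continuous_toFun := continuous_finsetProd _ fun i _ => (map_continuous (g i)).pow _
  zero_at_infty' := by
    have h := tendsto_finsetProd a.1.support fun i _ => ((g i).zero_at_infty').pow (a.1 i)
    obtain ⟨i, hi⟩ := Finsupp.support_nonempty_iff.2 a.2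
    have h0 : (0 : ℂ) ^ a.1 i = 0 := zero_pow (Finsupp.mem_support_iff.1 hi)
    rwa [Finset.prod_eq_zero hi h0] at h

theorem C0Monomial_apply (g : ℕ → C₀(A, ℂ)) (a : {a : ℕ →₀ ℕ // a ≠ 0}) (v : A) :
    C0Monomial g a v = ∏ i ∈ a.1.support, g i v ^ a.1 i := rfl

theorem continuous_C0Monomial (a : {a : ℕ →₀ ℕ // a ≠ 0}) :
    Continuous fun g : ℕ → C₀(A, ℂ) => C0Monomial g a := by
  have hiso := ZeroAtInftyContinuousMap.isometry_toBCF (α := A) (β := ℂ)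
  rw [hiso.isEmbedding.continuous_iff]
  have heq : (ZeroAtInftyContinuousMap.toBCF ∘ fun g : ℕ → C₀(A, ℂ) => C0Monomial g a) =
      fun g => ∏ i ∈ a.1.support, (g i).toBCF ^ a.1 i := by
    ext g v
    simp only [BoundedContinuousFunction.prod_apply, BoundedContinuousFunction.pow_apply]
    rfl
  rw [heq]
  exact continuous_finsetProd _ fun i _ => (hiso.continuous.comp (continuous_apply i)).pow _

theorem C0Monomial_single_one (g : ℕ → C₀(A, ℂ)) (i : ℕ) :
    C0Monomial g ⟨Finsupp.single i 1, by simp⟩ = g i := by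
  ext v
  rw [C0Monomial_apply]
  simp

end Monomials

theorem exists_finset_norm_sub_lt_subset {E : Type*} [NormedAddCommGroup E] {O : Set (ℕ → E)}
    (hO : IsOpen O) {h : ℕ → E} (hh : h ∈ O) :
    ∃ (J : Finset ℕ) (r : ℝ), 0 < r ∧ ∀ g : ℕ → E, (∀ i ∈ J, ‖g i - h i‖ < r) → g ∈ O := by
  obtain ⟨J, u, hu, hsub⟩ := isOpen_pi_iff.1 hO h hh
  have : ∀ᶠ r : ℝ in 𝓝[>] 0, ∀ i ∈ J, Metric.ball (h i) r ⊆ u i := by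
    rw [Filter.eventually_all_finset]
    intro i hi
    obtain ⟨r, hr, hball⟩ := Metric.isOpen_iff.1 (hu i hi).1 _ (hu i hi).2
    filter_upwards [Ioo_mem_nhdsGT hr] with s hs
    exact (Metric.ball_subset_ball hs.2.le).trans hball
  obtain ⟨r, hr, hr0⟩ := (this.and self_mem_nhdsWithin).exists
  exact ⟨J, r, hr0, fun g hg => hsub fun i hi => hr i hi (mem_ball_iff_norm.2 (hg i hi))⟩

theorem residual_denseRange {E : Type*} [NormedAddCommGroup E]
    [CompleteSpace E] [TopologicalSpace.SeparableSpace E] :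
    ∀ᶠ g : ℕ → E in residual _, DenseRange g := by
  have hU : ∀ (j k : ℕ), ∀ᶠ g : ℕ → E in residual _,
      ∃ i, ‖g i - TopologicalSpace.denseSeq E j‖ < 1 / (k + 1 : ℝ) := by
    intro j k
    refine residual_of_dense_open ?_ ?_
    · rw [Set.ofPred_exists]
      exact isOpen_iUnion fun i =>
        isOpen_lt ((continuous_apply i).sub continuous_const).norm continuous_const
    · rw [dense_iff_inter_open]
      rintro O hO ⟨h, hh⟩
      obtain ⟨J, r, hr, hJ⟩ := exists_finset_norm_sub_lt_subset hO hh
      obtain ⟨i, hi⟩ := J.exists_notMem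
      refine ⟨Function.update h i (TopologicalSpace.denseSeq E j), hJ _ fun l hl => ?_, i, ?_⟩
      · have : l ≠ i := fun e => hi (e ▸ hl)
        simpa [this] using hr
      · simp only [Function.update_self, sub_self, norm_zero]
        positivity
  filter_upwards [eventually_countable_forall.2 fun j => eventually_countable_forall.2 (hU j)]
    with g hg
  rw [DenseRange, Metric.dense_iff]
  intro x r hr
  obtain ⟨k, hk⟩ := exists_nat_one_div_lt (half_pos hr)
  obtain ⟨j, hj⟩ := (TopologicalSpace.denseRange_denseSeq E).exists_dist_lt x (half_pos hr)
  obtain ⟨i, hi⟩ := hg j k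
  refine ⟨g i, mem_ball_iff_norm.2 ?_, i, rfl⟩
  rw [dist_eq_norm, norm_sub_rev] at hj
  calc ‖g i - x‖ ≤ ‖g i - _‖ + ‖_ - x‖ := norm_sub_le_norm_sub_add_norm_sub _ _ _
    _ < r := by linarith

namespace DirTree

variable {A : Type*} {T : DirTree A} [TopologicalSpace A] [DiscreteTopology A] {lam : A → ℂ}
  {B : C₀(A, ℂ) →L[ℂ] C₀(A, ℂ)}

/-- If every `g i` equals `τ ^ w i` on the vertices that `B ^ n` does not annihilate, then
`B ^ n` sees each monomial in `g` as a power of `τ`. -/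
theorem pow_apply_C0Monomial_eq_sum
    (hB : ∀ (f : C₀(A, ℂ)) (v : A), B f v = ∑' u : T.chi v, lam u * f u)
    {S G : Finset A} {g : ℕ → C₀(A, ℂ)} {τ : A → ℂ} {w : ℕ → ℕ} (hw : ∀ i, 0 < w i) {n : ℕ}
    (a : {a : ℕ →₀ ℕ // a ≠ 0}) (hS : ∀ i ∈ a.1.support, ∀ u ∉ S, g i u = 0)
    (hg : ∀ i ∈ a.1.support, ∀ u, T.coef lam n u ≠ 0 → g i u = τ u ^ w i)
    (hτ : ∀ u ∉ G, τ u = 0) (v : A) [DecidablePred fun u => T.par^[n] u = v] :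
    (B ^ n) (C0Monomial g a) v =
      ∑ u ∈ G with T.par^[n] u = v,
        T.coef lam n u * τ u ^ ∑ i ∈ a.1.support, w i * a.1 i := by
  classical
  obtain ⟨i, hi⟩ := Finsupp.support_nonempty_iff.2 a.2
  have hai : a.1 i ≠ 0 := Finsupp.mem_support_iff.1 hi
  have hdeg : ∑ i ∈ a.1.support, w i * a.1 i ≠ 0 := by
    have h1 : w i * a.1 i ≤ ∑ i ∈ a.1.support, w i * a.1 i :=
      Finset.single_le_sum (f := fun i => w i * a.1 i) (fun _ _ => Nat.zero_le _) hi
    have h2 := Nat.mul_pos (hw i) (Nat.pos_of_ne_zero hai)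
    omega
  have hval : ∀ u, T.coef lam n u * C0Monomial g a u =
      T.coef lam n u * τ u ^ ∑ i ∈ a.1.support, w i * a.1 i := fun u => by
    by_cases hu : T.coef lam n u = 0
    · simp [hu]
    rw [C0Monomial_apply, ← Finset.prod_pow_eq_pow_sum]
    congr 1
    exact Finset.prod_congr rfl fun j hj => by rw [hg j hj u hu, pow_mul]
  have hsupp : ∀ u ∉ S ∪ G, C0Monomial g a u = 0 := fun u hu => by
    rw [C0Monomial_apply]
    refine Finset.prod_eq_zero hi ?_
    rw [hS i hi u fun h => hu (Finset.mem_union_left _ h), zero_pow hai]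
  rw [pow_apply_of_support_subset hB hsupp, Finset.sum_congr rfl fun u _ => hval u]
  symm
  refine Finset.sum_subset_zero_on_sdiff ?_ (fun u hu => ?_) fun _ _ => rfl
  · intro u hu
    simp only [Finset.mem_filter, Finset.mem_union] at hu ⊢
    exact ⟨Or.inr hu.1, hu.2⟩
  · simp only [Finset.mem_sdiff, Finset.mem_filter, not_and] at hu
    rw [hτ u fun h => hu.2 h hu.1.2, zero_pow hdeg, mul_zero]

open Classical in
theorem exists_dense_lowest_monomial
    (hB : ∀ (f : C₀(A, ℂ)) (v : A), B f v = ∑' u : T.chi v, lam u * f u)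
    (hhc : ∃ f : C₀(A, ℂ), Dense (Set.range fun n : ℕ => (B ^ n) f))
    {I : Finset {a : ℕ →₀ ℕ // a ≠ 0}} (hI : I.Nonempty) :
    ∃ a₀ ∈ I, ∀ (y : C₀(A, ℂ)) (ε : ℝ), 0 < ε → Dense {g : ℕ → C₀(A, ℂ) |
      ∃ n, ∀ a ∈ I, ‖(B ^ n) (C0Monomial g a) - if a = a₀ then y else 0‖ < ε} := by
  obtain ⟨w, hw, _, ha₀, hmin⟩ := exists_weight_unique_min (hI.image Subtype.val)
  obtain ⟨a₀, ha₀I, rfl⟩ := Finset.mem_image.1 ha₀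
  refine ⟨a₀, ha₀I, fun y ε hε => ?_⟩
  rw [dense_iff_inter_open]
  rintro O hO ⟨h, hh⟩
  obtain ⟨J, r, hr, hJ⟩ := exists_finset_norm_sub_lt_subset hO hh
  choose S hS using fun i => exists_finiteRestrict_near (h i) (half_pos hr)
  obtain ⟨F, hF⟩ := exists_finiteRestrict_near y hε
  set y' := finiteRestrict F y
  set m := ∑ i ∈ a₀.1.support, w i * a₀.1 i with hm
  have hm0 : 0 < m := by
    obtain ⟨i, hi⟩ := Finsupp.support_nonempty_iff.2 a₀.2
    exact (Nat.mul_pos (hw i) (Nat.pos_of_ne_zero (Finsupp.mem_support_iff.1 hi))).trans_le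
      (Finset.single_le_sum (f := fun i => w i * a₀.1 i) (fun _ _ => Nat.zero_le _) hi)
  obtain ⟨η, hη0, hη1, hηr, hηy⟩ : ∃ η : ℝ, 0 < η ∧ η ≤ 1 ∧ η < r / 2 ∧ η * ‖y'‖ < ε := by
    have h1 : ∀ᶠ η : ℝ in 𝓝[>] 0, η ∈ Set.Ioo 0 (min 1 (r / 2)) :=
      Ioo_mem_nhdsGT (lt_min one_pos (half_pos hr))
    have h2 : Tendsto (fun η : ℝ => η * ‖y'‖) (𝓝[>] 0) (𝓝 0) := by
      have : Tendsto (fun η : ℝ => η * ‖y'‖) (𝓝 0) (𝓝 (0 * ‖y'‖)) := tendsto_id.mul_const _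
      rw [zero_mul] at this
      exact this.mono_left nhdsWithin_le_nhds
    obtain ⟨η, hη, hy⟩ := (h1.and (h2.eventually_lt_const hε)).exists
    exact ⟨η, hη.1, (hη.2.trans_le (min_le_left _ _)).le, hη.2.trans_le (min_le_right _ _), hy⟩
  obtain ⟨N, hN⟩ := eventually_atTop.1 (T.eventually_coef_eq_zero lam (J.biUnion S))
  obtain ⟨n, hn, G, z, hzG, hzη, hz⟩ := exists_small_preimage hB hhc (y := y')
    (fun v (hv : v ∉ F) => if_neg hv) (pow_pos hη0 m) N
  choose τ hτ using fun u => IsAlgClosed.exists_pow_nat_eq (z u) hm0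
  have hτη : ∀ u, ‖τ u‖ ≤ η := fun u =>
    le_of_pow_le_pow_left₀ hm0.ne' hη0.le (by rw [← norm_pow, hτ]; exact hzη u)
  have hτG : ∀ u ∉ G, τ u = 0 := fun u hu =>
    pow_eq_zero_iff hm0.ne' |>.1 ((hτ u).trans (hzG u hu))
  let x : ℕ → C₀(A, ℂ) := fun i => finiteRestrict G fun u => τ u ^ w i
  have hx : ∀ i u, x i u = τ u ^ w i := fun i u => by
    by_cases hu : u ∈ G
    · exact if_pos hu
    · rw [hτG u hu, zero_pow (hw i).ne']
      exact if_neg hu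
  have hxη : ∀ i, ‖x i‖ ≤ η := fun i => by
    rw [C0_norm_le hη0.le]
    intro u
    rw [hx, norm_pow]
    exact (pow_le_of_le_one (norm_nonneg _) ((hτη u).trans hη1) (hw i).ne').trans (hτη u)
  let g : ℕ → C₀(A, ℂ) := fun i => (if i ∈ J then finiteRestrict (S i) (h i) else 0) + x i
  have hg : ∀ i u, T.coef lam n u ≠ 0 → g i u = τ u ^ w i := by
    intro i u hu
    simp only [g, ZeroAtInftyContinuousMap.add_apply, hx, add_eq_right]
    split_ifs with hi
    · exact if_neg fun hS => hu (hN n hn u (Finset.mem_biUnion.2 ⟨i, hi, hS⟩))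
    · rfl
  have hgS : ∀ i, ∀ u ∉ J.biUnion S ∪ G, g i u = 0 := by
    intro i u hu
    rw [Finset.mem_union, not_or] at hu
    simp only [g, ZeroAtInftyContinuousMap.add_apply, hx, hτG u hu.2, zero_pow (hw i).ne', add_zero]
    split_ifs with hi
    · exact if_neg fun hS => hu.1 (Finset.mem_biUnion.2 ⟨i, hi, hS⟩)
    · rfl
  refine ⟨g, hJ g fun i hi => ?_, n, fun a ha => ?_⟩
  · have heq : g i - h i = (finiteRestrict (S i) (h i) - h i) + x i := by
      simp only [g, if_pos hi]
      abel
    rw [heq]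
    linarith [norm_add_le (finiteRestrict (S i) (h i) - h i) (x i), hS i, hxη i]
  have hpow := pow_apply_C0Monomial_eq_sum hB hw a (fun i _ => hgS i) (fun i _ => hg i) hτG
  split_ifs with haa
  · subst haa
    have : (B ^ n) (C0Monomial g a) = y' := by
      ext v
      rw [hpow, ← (hz v).1]
      exact Finset.sum_congr rfl fun u _ => by rw [← hm, hτ]
    rwa [this]
  · rw [sub_zero]
    refine lt_of_le_of_lt ((C0_norm_le (by positivity)).2 fun v => ?_) hηy
    have hlt := hmin a.1 (Finset.mem_image_of_mem _ ha) fun h => haa (Subtype.ext h)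
    calc ‖(B ^ n) (C0Monomial g a) v‖
        ≤ ∑ u ∈ G with T.par^[n] u = v, η * ‖T.coef lam n u * z u‖ := by
          rw [hpow]
          refine norm_sum_le_of_le _ fun u _ => ?_
          obtain ⟨k, hk⟩ := Nat.exists_eq_add_of_lt hlt
          rw [hk, add_assoc, pow_add, hτ, ← mul_assoc, norm_mul, mul_comm, norm_pow]
          gcongr
          exact (pow_le_of_le_one (norm_nonneg _) ((hτη u).trans hη1) k.succ_ne_zero).trans (hτη u)
      _ = η * ‖y' v‖ := by rw [← Finset.mul_sum, (hz v).2]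
      _ ≤ η * ‖y'‖ := by
          gcongr
          exact C0_norm_apply_le _ _

open Classical in
theorem eventually_residual_lowest_monomial
    (hB : ∀ (f : C₀(A, ℂ)) (v : A), B f v = ∑' u : T.chi v, lam u * f u)
    (hhc : ∃ f : C₀(A, ℂ), Dense (Set.range fun n : ℕ => (B ^ n) f)) :
    ∀ᶠ g : ℕ → C₀(A, ℂ) in residual _, ∀ I : Finset {a : ℕ →₀ ℕ // a ≠ 0}, I.Nonempty →
      ∃ a₀ ∈ I, ∀ (y : C₀(A, ℂ)) (ε : ℝ), 0 < ε →
        ∃ n, ∀ a ∈ I, ‖(B ^ n) (C0Monomial g a) - if a = a₀ then y else 0‖ < ε := by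
  refine eventually_countable_forall.2 fun I => eventually_countable_forall.2 fun hI => ?_
  obtain ⟨a₀, ha₀, hdense⟩ := exists_dense_lowest_monomial hB hhc hI
  obtain ⟨f, hf⟩ := hhc
  have hU : ∀ j k : ℕ, ∀ᶠ g : ℕ → C₀(A, ℂ) in residual _,
      ∃ n, ∀ a ∈ I, ‖(B ^ n) (C0Monomial g a) - if a = a₀ then (B ^ j) f else 0‖
        < 1 / (k + 1 : ℝ) := by
    intro j k
    refine residual_of_dense_open ?_ (hdense _ _ (by positivity))
    simp only [Set.ofPred_exists, Set.ofPred_forall]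
    exact isOpen_iUnion fun n => isOpen_biInter_finset fun a _ => isOpen_lt
      (((B ^ n).continuous.comp (continuous_C0Monomial a)).sub continuous_const).norm
      continuous_const
  filter_upwards [eventually_countable_forall.2 fun j => eventually_countable_forall.2 (hU j)]
    with g hg
  refine ⟨a₀, ha₀, fun y ε hε => ?_⟩
  obtain ⟨k, hk⟩ := exists_nat_one_div_lt (half_pos hε)
  obtain ⟨_, ⟨j, rfl⟩, hj⟩ := hf.exists_dist_lt y (half_pos hε)
  obtain ⟨n, hn⟩ := hg j k
  refine ⟨n, fun a ha => ?_⟩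
  have hlt := hn a ha
  split_ifs at hlt ⊢
  · rw [dist_eq_norm, norm_sub_rev] at hj
    linarith [norm_sub_le_norm_sub_add_norm_sub ((B ^ n) (C0Monomial g a)) ((B ^ j) f) y]
  · linarith

end DirTree

theorem dense_range_pow_apply_sum {ι E : Type*} [NormedAddCommGroup E] [NormedSpace ℂ E]
    {B : E →L[ℂ] E} {M : ι → E} {I : Finset ι} {a₀ : ι}
    {_ : ∀ a, Decidable (a = a₀)} (ha₀ : a₀ ∈ I)
    (happrox : ∀ (y : E) (ε : ℝ), 0 < ε →
      ∃ n, ∀ a ∈ I, ‖(B ^ n) (M a) - if a = a₀ then y else 0‖ < ε)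
    {c : ι → ℂ} (hc : c a₀ ≠ 0) :
    Dense (Set.range fun n : ℕ => (B ^ n) (∑ a ∈ I, c a • M a)) := by
  rw [Metric.dense_iff]
  intro x r hr
  set C := ∑ a ∈ I, ‖c a‖
  have hC : 0 ≤ C := Finset.sum_nonneg fun _ _ => norm_nonneg _
  obtain ⟨n, hn⟩ := happrox ((c a₀)⁻¹ • x) (r / (C + 1)) (by positivity)
  refine ⟨_, mem_ball_iff_norm.2 ?_, n, rfl⟩
  have hx : x = ∑ a ∈ I, c a • (if a = a₀ then (c a₀)⁻¹ • x else 0) := by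
    rw [Finset.sum_eq_single_of_mem a₀ ha₀ fun a _ h => by rw [if_neg h, smul_zero], if_pos rfl,
      smul_inv_smul₀ hc]
  calc ‖(B ^ n) (∑ a ∈ I, c a • M a) - x‖
      = ‖∑ a ∈ I, c a • ((B ^ n) (M a) - if a = a₀ then (c a₀)⁻¹ • x else 0)‖ := by
        conv_lhs => rw [hx]
        simp only [map_sum, map_smul, smul_sub, Finset.sum_sub_distrib]
    _ ≤ ∑ a ∈ I, ‖c a‖ * (r / (C + 1)) := by
        refine norm_sum_le_of_le _ fun a ha => ?_
        rw [norm_smul]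
        gcongr
        exact (hn a ha).le
    _ = r * (C / (C + 1)) := by rw [← Finset.sum_mul]; ring
    _ < r := by
        have : C / (C + 1) < 1 := (div_lt_one (by positivity)).2 (by linarith)
        nlinarith

/-- Any bounded hypercyclic weighted backward shift on `c₀(A)` over a
rooted directed tree supports a dense, countably generated, free hypercyclic algebra for
the coordinatewise product: there are countably many generators `g i` such that the
(non-unital) algebra they generate — the linear span of the monomials
`M α = ∏_i (g i)^(α i)`, `α ≠ 0` — is dense, the monomials are linearly independent
(freeness), and every nonzero element of the algebra is a hypercyclic vector. -/
theorem stmt9 {A : Type*} [Countable A] [TopologicalSpace A] [DiscreteTopology A]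
    (T : DirTree A) (hleaf : ∀ v : A, (T.chi v).Nonempty)
    (lam : A → ℂ) (hlam : ∀ v, lam v ≠ 0)
    (B : C₀(A, ℂ) →L[ℂ] C₀(A, ℂ))
    (hB : ∀ (f : C₀(A, ℂ)) (v : A), B f v = ∑' u : T.chi v, lam u * f u)
    (hhc : ∃ f : C₀(A, ℂ), Dense (Set.range fun n : ℕ => (B ^ n) f)) :
    ∃ (g : ℕ → C₀(A, ℂ)) (M : {α : ℕ →₀ ℕ // α ≠ 0} → C₀(A, ℂ)),
      (∀ (α : {α : ℕ →₀ ℕ // α ≠ 0}) (v : A),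
        M α v = ∏ i ∈ (α : ℕ →₀ ℕ).support, (g i v) ^ ((α : ℕ →₀ ℕ) i)) ∧
      LinearIndependent ℂ M ∧
      Dense ((Submodule.span ℂ (Set.range M) : Submodule ℂ C₀(A, ℂ)) : Set C₀(A, ℂ)) ∧
      ∀ f ∈ Submodule.span ℂ (Set.range M), f ≠ 0 →
        Dense (Set.range fun n : ℕ => (B ^ n) f) := by
  have hne : finiteRestrict {T.root} 1 ≠ (0 : C₀(A, ℂ)) := fun h => by
    simpa [finiteRestrict_apply] using DFunLike.congr_fun h T.root
  have : TopologicalSpace.SeparableSpace C₀(A, ℂ) := by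
    obtain ⟨f, hf⟩ := hhc
    exact ⟨_, Set.countable_range _, hf⟩
  obtain ⟨g, hg, hgdense⟩ := (dense_of_mem_residual
    ((DirTree.eventually_residual_lowest_monomial hB hhc).and residual_denseRange)).nonempty
  have hcomb : ∀ c : {α : ℕ →₀ ℕ // α ≠ 0} →₀ ℂ, c ≠ 0 →
      Dense (Set.range fun n : ℕ =>
        (B ^ n) (Finsupp.linearCombination ℂ (C0Monomial g) c)) := fun c hc => by
    obtain ⟨a₀, ha₀, happrox⟩ := hg c.support (Finsupp.support_nonempty_iff.2 hc)
    simp only [Finsupp.linearCombination_apply, Finsupp.sum]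
    exact dense_range_pow_apply_sum ha₀ happrox (Finsupp.mem_support_iff.1 ha₀)
  refine ⟨g, C0Monomial g, C0Monomial_apply g, ?_, ?_, ?_⟩
  · rw [linearIndependent_iff]
    intro c hc
    by_contra hc0
    have hd := hcomb c hc0
    simp only [hc, map_zero, Set.range_const] at hd
    have hcl := hd (finiteRestrict {T.root} 1)
    rw [closure_singleton] at hcl
    exact hne hcl
  · refine hgdense.mono ?_
    rintro _ ⟨i, rfl⟩
    exact Submodule.subset_span ⟨_, C0Monomial_single_one g i⟩
  · intro f hf hf0
    obtain ⟨c, rfl⟩ := (Finsupp.mem_span_range_iff_exists_finsupp).1 hf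
    exact hcomb c fun h => hf0 (by simp [h])
end

section
/- Let A be the dyadic rooted tree, 1 < p < ∞ with conjugate exponent p*, and let α ∈ (0, (p−1)/p). Define the weight λ by λ(r→v_i) = θ_n(i)^{-α} for each word i of length n (θ_n being the lexicographic position). Then for every vertex v_i of A, ∑_{u∈Chi^N(v_i)} |λ(v_i→u)|^{p*} ≥ 2^{N(1−αp*)} → +∞ as N → ∞. In particular the induced weighted backward shift B_λ is hypercyclic on ℓ^p(A). -/
open Filter Topology
open scoped ENNReal NNReal

/-- Lexicographic position of a word over a two-letter alphabet. -/
def theta (l : List Bool) : ℕ :=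
  1 + l.foldl (fun a b => 2 * a + (if b then 1 else 0)) 0

/-- The weight on the dyadic tree determined by `λ(r → v_i) = θ(i)^{-α}`: the individual
edge weight at a vertex `u ≠ r` is `(θ(Par u)/θ(u))^α`. -/
noncomputable def dyadicWeight (α : ℝ) : List Bool → ℂ :=
  fun u => ((((theta u.dropLast : ℝ) / (theta u : ℝ)) ^ α : ℝ) : ℂ)

lemma theta_pos (l : List Bool) : 0 < theta l := by
  unfold theta; omega

lemma theta_append_singleton_le (l : List Bool) (b : Bool) :
    theta (l ++ [b]) ≤ 2 * theta l := by
  cases b <;> simp [theta] <;> omega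

lemma theta_append_le (i j : List Bool) : theta (i ++ j) ≤ 2 ^ j.length * theta i := by
  induction j using List.reverseRecOn with
  | nil => simp
  | append_singleton j b ih =>
    rw [← List.append_assoc]
    refine (theta_append_singleton_le _ b).trans ?_
    rw [List.length_append, List.length_singleton, pow_succ]
    linarith

lemma theta_le_two_mul_theta_dropLast {u : List Bool} (hu : u ≠ []) :
    theta u ≤ 2 * theta u.dropLast := by
  conv_lhs => rw [← List.dropLast_append_getLast hu]
  exact theta_append_singleton_le _ _

lemma two_rpow_le_sum_theta_ratio {s : ℝ} (hs : 0 ≤ s) (i : List Bool) (N : ℕ) :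
    (2 : ℝ) ^ ((N : ℝ) * (1 - s)) ≤
      ∑ j : Fin N → Bool, ((theta i : ℝ) / (theta (i ++ List.ofFn j) : ℝ)) ^ s := by
  have hterm (j : Fin N → Bool) :
      (2 : ℝ) ^ (-(N * s)) ≤ ((theta i : ℝ) / (theta (i ++ List.ofFn j) : ℝ)) ^ s := by
    have h1 : (theta (i ++ List.ofFn j) : ℝ) ≤ 2 ^ N * theta i := by
      have := theta_append_le i (List.ofFn j)
      rw [List.length_ofFn] at this
      exact_mod_cast this
    have h2 : (0 : ℝ) < theta (i ++ List.ofFn j) := by exact_mod_cast theta_pos _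
    rw [← neg_mul, Real.rpow_mul zero_le_two, Real.rpow_neg zero_le_two, Real.rpow_natCast]
    refine Real.rpow_le_rpow (by positivity) ?_ hs
    rw [le_div_iff₀ h2, inv_mul_le_iff₀ (by positivity)]
    exact h1
  calc (2 : ℝ) ^ ((N : ℝ) * (1 - s))
      = ∑ _j : Fin N → Bool, (2 : ℝ) ^ (-(N * s)) := by
        rw [mul_sub, mul_one, sub_eq_add_neg, Real.rpow_add two_pos, Real.rpow_natCast]
        simp
    _ ≤ _ := Finset.sum_le_sum fun j _ => hterm j

lemma tendsto_two_rpow_natCast_mul {t : ℝ} (ht : 0 < t) :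
    Tendsto (fun N : ℕ => (2 : ℝ) ^ ((N : ℝ) * t)) atTop atTop :=
  (tendsto_rpow_atTop_of_base_gt_one 2 one_lt_two).comp
    (tendsto_natCast_atTop_atTop.atTop_mul_const ht)

/-- A continuous linear operator with contractive lifts and a dense set of vectors killed by
some power has a dense orbit. -/
theorem exists_dense_orbit_of_contractive_lift {𝕜 E : Type*} [NontriviallyNormedField 𝕜]
    [NormedAddCommGroup E] [NormedSpace 𝕜 E] [CompleteSpace E] [TopologicalSpace.SeparableSpace E]
    (B : E →L[𝕜] E) {c : ℝ} (hc0 : 0 ≤ c) (hc1 : c < 1)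
    (hlift : ∀ y, ∃ z, B z = y ∧ ‖z‖ ≤ c * ‖y‖)
    (hdense : Dense {x | ∃ n, (B ^ n) x = 0}) :
    ∃ f, Dense (Set.range fun n : ℕ => (B ^ n) f) := by
  have hliftn (n : ℕ) (y : E) : ∃ z, (B ^ n) z = y ∧ ‖z‖ ≤ c ^ n * ‖y‖ := by
    induction n with
    | zero => exact ⟨y, by simp⟩
    | succ n ih =>
      obtain ⟨z, hz, hzn⟩ := ih
      obtain ⟨w, hw, hwn⟩ := hlift z
      refine ⟨w, by rw [pow_succ, mul_apply_eq_comp, hw, hz], hwn.trans ?_⟩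
      rw [pow_succ', mul_assoc]
      gcongr
  have : SecondCountableTopology E := UniformSpace.secondCountable_of_separable E
  have htrans (U : Set E) (hU : IsOpen U) (hUne : U.Nonempty) :
      Dense (⋃ n : ℕ, (B ^ n) ⁻¹' U) := by
    rw [dense_iff_inter_open]
    intro V hV hVne
    obtain ⟨x, hxV, m, hxm⟩ := hdense.inter_open_nonempty V hV hVne
    obtain ⟨y, hy⟩ := hUne
    choose z hz hzn using fun n => hliftn n y
    have hz0 : Tendsto z atTop (𝓝 0) := by
      refine squeeze_zero_norm hzn ?_
      simpa using (tendsto_pow_atTop_nhds_zero_of_lt_one hc0 hc1).mul_const ‖y‖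
    have hxz : Tendsto (fun n => x + z n) atTop (𝓝 x) := by
      simpa using hz0.const_add x
    obtain ⟨n, hnV, hmn⟩ :=
      ((hxz.eventually (hV.mem_nhds hxV)).and (eventually_ge_atTop m)).exists
    refine ⟨x + z n, hnV, Set.mem_iUnion.2 ⟨n, ?_⟩⟩
    have hxn : (B ^ n) x = 0 := by
      rw [← Nat.sub_add_cancel hmn, pow_add, mul_apply_eq_comp, hxm, map_zero]
    rwa [Set.mem_preimage, map_add, hxn, hz, zero_add]
  have hcount := TopologicalSpace.countable_countableBasis E
  have hG : Dense (⋂ U ∈ TopologicalSpace.countableBasis E, ⋃ n : ℕ, (B ^ n) ⁻¹' U) :=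
    dense_biInter_of_isOpen
      (fun U hU => isOpen_iUnion fun n =>
        (TopologicalSpace.isOpen_of_mem_countableBasis hU).preimage (B ^ n).continuous)
      hcount
      (fun U hU => htrans U (TopologicalSpace.isOpen_of_mem_countableBasis hU)
        (TopologicalSpace.nonempty_of_mem_countableBasis hU))
  obtain ⟨f, hf⟩ := hG.nonempty
  refine ⟨f, (TopologicalSpace.isBasis_countableBasis E).dense_iff.2 fun U hU _ => ?_⟩
  obtain ⟨n, hn⟩ := Set.mem_iUnion.1 (Set.mem_iInter₂.1 hf U hU)
  exact ⟨_, hn, n, rfl⟩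

lemma lp.dense_of_forall_single_mem {ι 𝕜 : Type*} [DecidableEq ι] [NontriviallyNormedField 𝕜]
    {p : ℝ≥0∞} [Fact (1 ≤ p)] (hp : p ≠ ∞) (S : Submodule 𝕜 (lp (fun _ : ι => 𝕜) p))
    (hS : ∀ i, lp.single p i (1 : 𝕜) ∈ S) : Dense (S : Set (lp (fun _ : ι => 𝕜) p)) := by
  intro f
  refine mem_closure_of_tendsto (lp.hasSum_single hp f) (Eventually.of_forall fun s => ?_)
  refine S.sum_mem fun i _ => ?_
  have := S.smul_mem (f i) (hS i)
  rwa [← lp.single_smul, smul_eq_mul, mul_one] at this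

lemma lp.separableSpace_of_countable {ι : Type*} [Countable ι]
    {p : ℝ≥0∞} [Fact (1 ≤ p)] (hp : p ≠ ∞) :
    TopologicalSpace.SeparableSpace (lp (fun _ : ι => ℂ) p) := by
  classical
  let S : Submodule ℂ (lp (fun _ : ι => ℂ) p) :=
    Submodule.span ℂ (Set.range fun i => lp.single p i (1 : ℂ))
  have hd : Dense (S : Set (lp (fun _ : ι => ℂ) p)) :=
    lp.dense_of_forall_single_mem hp S fun i => Submodule.subset_span ⟨i, rfl⟩
  have hs : TopologicalSpace.IsSeparable (S : Set (lp (fun _ : ι => ℂ) p)) :=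
    (Set.countable_range _).isSeparable.span
  rw [← TopologicalSpace.isSeparable_univ_iff, ← hd.closure_eq]
  exact hs.closure

section Words

variable {p : ℝ≥0∞}

lemma summable_dropLast_and_tsum_le {g h : List Bool → ℝ} (hg : ∀ u, 0 ≤ g u) (hg0 : g [] = 0)
    (hgh : ∀ u, u ≠ [] → g u ≤ h u.dropLast) (hh : Summable h) :
    Summable g ∧ ∑' u, g u ≤ 2 * ∑' v, h v := by
  let e : Bool × List Bool → List Bool := fun x => x.2 ++ [x.1]
  have he : Function.Injective e := by
    rintro ⟨b, v⟩ ⟨b', v'⟩ hv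
    obtain ⟨h1, h2⟩ := List.append_inj' hv rfl
    simp_all
  have hrange (u : List Bool) (hu : u ∉ Set.range e) : g u = 0 := by
    by_cases hu0 : u = []
    · rw [hu0, hg0]
    · exact absurd ⟨(u.getLast hu0, u.dropLast), List.dropLast_append_getLast hu0⟩ hu
  have hle (x : Bool × List Bool) : g (e x) ≤ h x.2 := by
    simpa [e] using hgh (e x) (by simp [e])
  have hh0 (v : List Bool) : 0 ≤ h v := (hg _).trans (hle (true, v))
  have hsum : Summable fun x : Bool × List Bool => h x.2 :=
    (summable_prod_of_nonneg fun x => hh0 x.2).2 ⟨fun _ => hh, Summable.of_finite⟩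
  have hsg : Summable (g ∘ e) := hsum.of_nonneg_of_le (fun x => hg _) hle
  refine ⟨(he.summable_iff hrange).1 hsg, ?_⟩
  rw [← he.tsum_eq (Function.support_subset_iff'.2 hrange)]
  refine (hsg.tsum_le_tsum hle hsum).trans_eq ?_
  rw [hsum.tsum_prod]
  simp

lemma dyadicWeight_ne_zero (α : ℝ) (u : List Bool) : dyadicWeight α u ≠ 0 := by
  have h1 : (0 : ℝ) < theta u := by exact_mod_cast theta_pos u
  have h2 : (0 : ℝ) < theta u.dropLast := by exact_mod_cast theta_pos _
  exact Complex.ofReal_ne_zero.2 (Real.rpow_pos_of_pos (div_pos h2 h1) _).ne'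

lemma norm_inv_dyadicWeight_le {α : ℝ} (hα : 0 ≤ α) {u : List Bool} (hu : u ≠ []) :
    ‖(dyadicWeight α u)⁻¹‖ ≤ 2 ^ α := by
  have h1 : (0 : ℝ) < theta u := by exact_mod_cast theta_pos u
  have h2 : (0 : ℝ) < theta u.dropLast := by exact_mod_cast theta_pos _
  have h3 : (theta u : ℝ) ≤ 2 * theta u.dropLast := by
    exact_mod_cast theta_le_two_mul_theta_dropLast hu
  rw [dyadicWeight, ← Complex.ofReal_inv, Complex.norm_real, ← Real.inv_rpow (by positivity),
    inv_div, Real.norm_of_nonneg (by positivity)]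
  refine Real.rpow_le_rpow (by positivity) ?_ hα
  rwa [div_le_iff₀ h2]

namespace DirTree

variable [Fact (1 ≤ p)] {T : DirTree (List Bool)}
  {B : lp (fun _ : List Bool => ℂ) p →L[ℂ] lp (fun _ : List Bool => ℂ) p}

lemma mem_chi_iff (hroot : T.root = []) (hpar : T.par = List.dropLast) {u v : List Bool} :
    u ∈ T.chi v ↔ u ≠ [] ∧ u.dropLast = v := by
  simp [chi, hroot, hpar]

lemma card_chi (hroot : T.root = []) (hpar : T.par = List.dropLast) (v : List Bool) :
    Nat.card (T.chi v) = 2 := by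
  have h : T.chi v = {v ++ [false], v ++ [true]} := by
    ext u
    rw [mem_chi_iff hroot hpar]
    constructor
    · rintro ⟨hu, rfl⟩
      have := List.dropLast_append_getLast hu
      cases hb : u.getLast hu <;> rw [hb] at this <;> simp [this]
    · rintro (rfl | rfl) <;> simp
  rw [h, Nat.card_coe_set_eq, Set.ncard_pair (by simp)]

lemma IsWBS.pow_apply_eq_zero {lam : List Bool → ℂ} (hB : T.IsWBS lam B) (hroot : T.root = [])
    (hpar : T.par = List.dropLast) (n : ℕ) (f : lp (fun _ : List Bool => ℂ) p)
    (hf : ∀ u : List Bool, n ≤ u.length → f u = 0) : (B ^ n) f = 0 := by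
  induction n generalizing f with
  | zero => exact lp.ext (funext fun u => hf u (Nat.zero_le _))
  | succ n ih =>
    rw [pow_succ, mul_apply_eq_comp]
    refine ih _ fun v hv => ?_
    rw [hB]
    refine (tsum_congr fun u => ?_).trans tsum_zero
    obtain ⟨hu, huv⟩ := (mem_chi_iff hroot hpar).1 u.2
    have hlen : (u : List Bool).length = v.length + 1 := by
      have := List.length_pos_iff.2 hu
      have := congrArg List.length huv
      rw [List.length_dropLast] at this
      omega
    rw [hf u (by omega), mul_zero]

lemma IsWBS.dense_setOf_pow_apply_eq_zero {lam : List Bool → ℂ} (hB : T.IsWBS lam B)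
    (hroot : T.root = []) (hpar : T.par = List.dropLast) (hp : p ≠ ∞) :
    Dense {x | ∃ n, (B ^ n) x = 0} := by
  let S : Submodule ℂ (lp (fun _ : List Bool => ℂ) p) :=
    { carrier := {f | ∃ n : ℕ, ∀ u : List Bool, n ≤ u.length → f u = 0}
      zero_mem' := ⟨0, fun _ _ => rfl⟩
      add_mem' := by
        rintro f g ⟨m, hm⟩ ⟨n, hn⟩
        refine ⟨max m n, fun u hu => ?_⟩
        rw [lp.coeFn_add, Pi.add_apply, hm u (le_of_max_le_left hu),
          hn u (le_of_max_le_right hu), add_zero]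
      smul_mem' := by
        rintro c f ⟨n, hn⟩
        refine ⟨n, fun u hu => ?_⟩
        rw [lp.coeFn_smul, Pi.smul_apply, hn u hu, smul_zero] }
  have hS : Dense (S : Set (lp (fun _ : List Bool => ℂ) p)) := by
    refine lp.dense_of_forall_single_mem hp S fun i => ⟨i.length + 1, fun u hu => ?_⟩
    refine lp.single_apply_ne p i _ ?_
    rintro rfl
    omega
  refine hS.mono ?_
  rintro f ⟨n, hn⟩
  exact ⟨n, hB.pow_apply_eq_zero hroot hpar n f hn⟩

lemma IsWBS.exists_lift {α : ℝ} (hα : 0 ≤ α) (hB : T.IsWBS (dyadicWeight α) B)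
    (hroot : T.root = []) (hpar : T.par = List.dropLast) (hp : p ≠ ∞)
    (y : lp (fun _ : List Bool => ℂ) p) :
    ∃ z, B z = y ∧ ‖z‖ ≤ (2 : ℝ) ^ (α - 1 + 1 / p.toReal) * ‖y‖ := by
  have hp0 : 0 < p.toReal :=
    ENNReal.toReal_pos (zero_lt_one.trans_le (Fact.out : 1 ≤ p)).ne' hp
  let F : List Bool → ℂ := fun u =>
    if u = [] then 0 else 2⁻¹ * (dyadicWeight α u)⁻¹ * y u.dropLast
  have hF (u : List Bool) (hu : u ≠ []) :
      ‖F u‖ ^ p.toReal ≤ ((2 : ℝ) ^ (α - 1)) ^ p.toReal * ‖y u.dropLast‖ ^ p.toReal := by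
    rw [← Real.mul_rpow (by positivity) (norm_nonneg _)]
    refine Real.rpow_le_rpow (norm_nonneg _) ?_ hp0.le
    simp only [F, if_neg hu, norm_mul]
    gcongr
    rw [Real.rpow_sub_one two_ne_zero, div_eq_inv_mul]
    have := norm_inv_dyadicWeight_le hα hu
    rw [show ‖(2⁻¹ : ℂ)‖ = 2⁻¹ by simp]
    gcongr
  obtain ⟨hFs, hFle⟩ := summable_dropLast_and_tsum_le
    (g := fun u => ‖F u‖ ^ p.toReal)
    (h := fun v => ((2 : ℝ) ^ (α - 1)) ^ p.toReal * ‖y v‖ ^ p.toReal)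
    (fun u => by positivity) (by simp [F, hp0.ne']) hF
    (((lp.memℓp y).summable hp0).mul_left _)
  let z : lp (fun _ : List Bool => ℂ) p := ⟨F, memℓp_gen hFs⟩
  refine ⟨z, lp.ext (funext fun v => ?_), ?_⟩
  · rw [hB]
    have hterm (u : T.chi v) : dyadicWeight α u * z u = 2⁻¹ * y v := by
      obtain ⟨hu, huv⟩ := (mem_chi_iff hroot hpar).1 u.2
      change dyadicWeight α u * F u = _
      simp only [F, if_neg hu, huv]
      field_simp [dyadicWeight_ne_zero α u]
    rw [tsum_congr hterm, tsum_const, card_chi hroot hpar]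
    simp
  · rw [← Real.rpow_le_rpow_iff (norm_nonneg _) (by positivity) hp0,
      lp.norm_rpow_eq_tsum hp0]
    refine hFle.trans_eq ?_
    rw [tsum_mul_left, ← lp.norm_rpow_eq_tsum hp0, Real.mul_rpow (by positivity) (norm_nonneg _),
      Real.rpow_add two_pos, Real.mul_rpow (by positivity) (by positivity),
      ← Real.rpow_mul zero_le_two (1 / p.toReal), one_div_mul_cancel hp0.ne', Real.rpow_one]
    ring

end DirTree

end Words

/-- On the dyadic rooted tree with weight `λ(r→v_i) = θ_n(i)^{-α}`,
`0 < α < (p−1)/p`, one has `∑_{u ∈ Chi^N(v_i)} |λ(v_i→u)|^{p*} ≥ 2^{N(1−αp*)} → ∞`; in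
particular the induced weighted backward shift is hypercyclic on `ℓ^p` of the dyadic tree
(the tree on finite words over a two-letter alphabet, with parent map `List.dropLast`). -/
theorem stmt13 (p : ℝ≥0∞) [Fact (1 ≤ p)] (hp1 : 1 < p) (hp2 : p ≠ ∞)
    (α : ℝ) (hα1 : 0 < α) (hα2 : α < (p.toReal - 1) / p.toReal) :
    (∀ (i : List Bool) (N : ℕ),
      (2 : ℝ) ^ ((N : ℝ) * (1 - α * (p.toReal / (p.toReal - 1)))) ≤
        ∑ j : Fin N → Bool,
          ((theta i : ℝ) / (theta (i ++ List.ofFn j) : ℝ)) ^ (α * (p.toReal / (p.toReal - 1)))) ∧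
    (∀ i : List Bool,
      Tendsto (fun N : ℕ => ∑ j : Fin N → Bool,
          ((theta i : ℝ) / (theta (i ++ List.ofFn j) : ℝ)) ^ (α * (p.toReal / (p.toReal - 1))))
        atTop atTop) ∧
    (∀ T : DirTree (List Bool), T.root = [] → T.par = List.dropLast →
      ∀ B : lp (fun _ : List Bool => ℂ) p →L[ℂ] lp (fun _ : List Bool => ℂ) p,
        T.IsWBS (dyadicWeight α) B →
        ∃ f : lp (fun _ : List Bool => ℂ) p,
          Dense (Set.range fun n : ℕ => (B ^ n) f)) := by
  have hp : 1 < p.toReal := by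
    rw [← ENNReal.toReal_one]
    exact (ENNReal.toReal_lt_toReal ENNReal.one_ne_top hp2).2 hp1
  have hp0 : 0 < p.toReal := one_pos.trans hp
  have hp' : 0 < p.toReal - 1 := sub_pos.2 hp
  have hs : 0 ≤ α * (p.toReal / (p.toReal - 1)) := by positivity
  have ht : 0 < 1 - α * (p.toReal / (p.toReal - 1)) := by
    rw [lt_div_iff₀ hp0] at hα2
    rw [sub_pos, ← mul_div_assoc, div_lt_one hp']
    exact hα2
  refine ⟨two_rpow_le_sum_theta_ratio hs,
    fun i => tendsto_atTop_mono (two_rpow_le_sum_theta_ratio hs i)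
      (tendsto_two_rpow_natCast_mul ht), fun T hroot hpar B hB => ?_⟩
  have := lp.separableSpace_of_countable (ι := List Bool) hp2
  refine exists_dense_orbit_of_contractive_lift B
    (c := (2 : ℝ) ^ (α - 1 + 1 / p.toReal)) (by positivity) ?_
    (hB.exists_lift hα1.le hroot hpar hp2) (hB.dense_setOf_pow_apply_eq_zero hroot hpar hp2)
  refine Real.rpow_lt_one_of_one_lt_of_neg one_lt_two ?_
  rw [sub_div, div_self hp0.ne'] at hα2
  linarith
end

section
/- Let A be the rooted 'comb' tree: the root r has infinitely many children u_{i,1} (i ∈ ℕ), and each u_{i,j} has exactly one child u_{i,j+1}. Let 1 < p < ∞ and let λ be a weight with λ(r→u_{i,j}) = α_i β_j for complex sequences (α_i), (β_j), such that B_λ is bounded on ℓ^p(A). If B_λ is hypercyclic on ℓ^p(A), then (α_i) ∈ ℓ^{p*}(ℕ) and there is an increasing sequence (n_k) such that |β_{n_k}| → ∞ and |λ(u_{i,j} → u_{i,j+n_k})| → ∞ for all i,j; consequently sup_{u∈Chi^{n_k}(v)} |λ(v→u)| → ∞ for all v ∈ A, and hence B_λ is hypercyclic iff it has a hypercyclic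 algebra. -/
open Filter Topology
open scoped ENNReal NNReal

/-- The parent map of the rooted "comb" tree: the root `none` has children
`some (i, 0) = u_{i,1}` for every `i ∈ ℕ`, and each `u_{i,j} = some (i, j-1)` has the
single child `u_{i,j+1} = some (i, j)`. -/
def combPar : Option (ℕ × ℕ) → Option (ℕ × ℕ)
  | none => none
  | some (_, 0) => none
  | some (i, j + 1) => some (i, j)

/-- Coordinatewise multiplication on `ℓ^p(A)`, as a continuous bilinear map. -/
noncomputable def lpMul {A : Type*} (p : ℝ≥0∞) [Fact (1 ≤ p)] :
    lp (fun _ : A => ℂ) p →L[ℂ] lp (fun _ : A => ℂ) p →L[ℂ] lp (fun _ : A => ℂ) p :=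
  have hp : p ≠ 0 := (zero_lt_one.trans_le Fact.out).ne'
  have key : ∀ (f g : lp (fun _ : A => ℂ) p) (v : A), ‖f v * g v‖ ≤ ‖((‖f‖ : ℂ) • g) v‖ := by
    intro f g v
    simp only [lp.coeFn_smul, Pi.smul_apply, norm_mul, smul_eq_mul, Complex.norm_real, norm_norm]
    gcongr
    exact lp.norm_apply_le_norm hp f v
  LinearMap.mkContinuous₂
    (LinearMap.mk₂ ℂ
      (fun f g => ⟨fun v => f v * g v, (lp.memℓp ((‖f‖ : ℂ) • g)).mono' (key f g)⟩)
      (fun f f' g => by ext v; exact add_mul _ _ _)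
      (fun c f g => by ext v; simp [mul_assoc])
      (fun f g g' => by ext v; exact mul_add _ _ _)
      (fun c f g => by ext v; simp [mul_left_comm]))
    1
    (fun f g => by
      rw [one_mul]
      refine (lp.norm_mono (y := (‖f‖ : ℂ) • g) hp (key f g)).trans ?_
      rw [norm_smul, Complex.norm_real, norm_norm])

theorem lpMul_apply {A : Type*} (p : ℝ≥0∞) [Fact (1 ≤ p)] (f g : lp (fun _ : A => ℂ) p) (v : A) :
    lpMul p f g v = f v * g v := rfl

/-- `lpPow f n` is the coordinatewise power `f ^ (n + 1)` in `ℓ^p(A)`. -/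
noncomputable def lpPow {A : Type*} {p : ℝ≥0∞} [Fact (1 ≤ p)] (f : lp (fun _ : A => ℂ) p) :
    ℕ → lp (fun _ : A => ℂ) p
  | 0 => f
  | n + 1 => lpMul p f (lpPow f n)

theorem sum_single_apply_eq_zero {A ι : Type*} {p : ℝ≥0∞} [DecidableEq A] (s : Finset ι)
    (φ : ι → A) (a : ι → ℂ) {u : A} (hu : ∀ i ∈ s, φ i ≠ u) :
    (∑ i ∈ s, lp.single p (φ i) (a i) : lp (fun _ : A => ℂ) p) u = 0 := by
  rw [lp.coeFn_sum, Finset.sum_apply]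
  exact Finset.sum_eq_zero fun i hi => lp.single_apply_ne p _ _ (hu i hi).symm

section lpPow

variable {A : Type*} {p : ℝ≥0∞} [Fact (1 ≤ p)]

theorem lpPow_apply (f : lp (fun _ : A => ℂ) p) (n : ℕ) (v : A) :
    lpPow f n v = f v ^ (n + 1) := by
  induction n with
  | zero => simp [lpPow]
  | succ n ih => rw [lpPow, lpMul_apply, ih, pow_succ' (f v) (n + 1)]

theorem continuous_lpPow (n : ℕ) :
    Continuous fun f : lp (fun _ : A => ℂ) p => lpPow f n := by
  induction n with
  | zero => exact continuous_id
  | succ n ih => exact (lpMul p).continuous.clm_apply ih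

theorem lpPow_add_of_disjoint {f g : lp (fun _ : A => ℂ) p} (h : ∀ v, f v = 0 ∨ g v = 0) (n : ℕ) :
    lpPow (f + g) n = lpPow f n + lpPow g n := by
  ext v
  simp only [lpPow_apply, lp.coeFn_add, Pi.add_apply]
  rcases h v with h | h <;> simp [h]

variable [DecidableEq A]

theorem lpPow_single (v : A) (c : ℂ) (n : ℕ) :
    lpPow (lp.single p v c : lp (fun _ : A => ℂ) p) n = lp.single p v (c ^ (n + 1)) := by
  ext u
  rw [lpPow_apply]
  rcases eq_or_ne u v with rfl | h
  · simp
  · simp [h]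

theorem lpPow_sum_single {ι : Type*} {φ : ι → A} (hφ : φ.Injective) (s : Finset ι) (a : ι → ℂ)
    (n : ℕ) :
    lpPow (∑ i ∈ s, lp.single p (φ i) (a i) : lp (fun _ : A => ℂ) p) n
      = ∑ i ∈ s, lp.single p (φ i) (a i ^ (n + 1)) := by
  classical
  induction s using Finset.induction_on with
  | empty =>
    ext v
    simp [lpPow_apply]
  | insert i s hi ih =>
    rw [Finset.sum_insert hi, Finset.sum_insert hi, lpPow_add_of_disjoint, lpPow_single, ih]
    intro v
    rcases eq_or_ne v (φ i) with rfl | h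
    · exact Or.inr (sum_single_apply_eq_zero s φ a fun j hj h => hi (hφ h ▸ hj))
    · exact Or.inl (lp.single_apply_ne p _ _ h)

end lpPow

section Criterion

variable {A : Type*} {p : ℝ≥0∞} [Fact (1 ≤ p)]

/-- A Baire category criterion: if sufficiently many vectors have an orbit along which one power
approximates a target while the higher powers become small, then some vector has the property
that all nonconstant polynomials without constant term in it are hypercyclic. -/
theorem exists_hypercyclic_generator [Nontrivial (lp (fun _ : A => ℂ) p)]
    (B : lp (fun _ : A => ℂ) p →L[ℂ] lp (fun _ : A => ℂ) p)
    {y : ℕ → lp (fun _ : A => ℂ) p} (hy : DenseRange y)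
    (hB : ∀ (m M : ℕ) (w : lp (fun _ : A => ℂ) p) (δ : ℝ), 0 < δ →
      Dense {f | ∃ N : ℕ, ‖(B ^ N) (lpPow f m) - w‖ < δ ∧
        ∀ n ∈ Finset.Ioc m M, ‖(B ^ N) (lpPow f n)‖ < δ}) :
    ∃ f : lp (fun _ : A => ℂ) p, f ≠ 0 ∧ ∀ (P : Polynomial ℂ) (h : lp (fun _ : A => ℂ) p),
      (∀ v, h v = f v * P.eval (f v)) → h ≠ 0 → Dense (Set.range fun n : ℕ => (B ^ n) h) := by
  let G : ℕ × ℕ × ℕ → Set (lp (fun _ : A => ℂ) p) := fun q =>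
    {f | ∃ N : ℕ, ‖(B ^ N) (lpPow f q.1) - y q.2.2‖ < 1 / ((q.2.1 : ℝ) + 1) ∧
      ∀ n ∈ Finset.Ioc q.1 q.2.1, ‖(B ^ N) (lpPow f n)‖ < 1 / ((q.2.1 : ℝ) + 1)}
  have hcont : ∀ N n, Continuous fun f : lp (fun _ : A => ℂ) p => (B ^ N) (lpPow f n) :=
    fun N n => (B ^ N).continuous.comp (continuous_lpPow n)
  have hG : ∀ q, IsOpen (G q) := by
    intro q
    simp only [G, Set.ofPred_exists, Set.ofPred_and, Set.ofPred_forall]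
    refine isOpen_iUnion fun N => IsOpen.inter ?_ ?_
    · exact isOpen_lt ((hcont _ _).sub continuous_const).norm continuous_const
    · exact isOpen_biInter_finset fun n _ => isOpen_lt (hcont _ _).norm continuous_const
  have hdense : Dense (⋂ q, G q) :=
    dense_iInter_of_isOpen hG fun q => hB _ _ _ _ (by positivity)
  obtain ⟨g, hg⟩ := exists_ne (0 : lp (fun _ : A => ℂ) p)
  obtain ⟨f, hfG, hf⟩ := hdense.exists_mem_open isOpen_ne ⟨g, hg⟩
  refine ⟨f, hf, fun P h hP h0 => ?_⟩
  have hh : h = ∑ k ∈ Finset.range (P.natDegree + 1), P.coeff k • lpPow f k := by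
    ext v
    simp only [hP, lp.coeFn_sum, Finset.sum_apply, lp.coeFn_smul, Pi.smul_apply, lpPow_apply,
      P.eval_eq_sum_range, Finset.mul_sum, smul_eq_mul]
    exact Finset.sum_congr rfl fun k _ => by ring
  have hP0 : P ≠ 0 := by
    rintro rfl
    exact h0 (by ext v; simp [hP])
  set m := P.natTrailingDegree with hm
  have hc : P.coeff m ≠ 0 := Polynomial.trailingCoeff_nonzero_iff_nonzero.2 hP0
  set c := P.coeff m with hcdef
  rw [Metric.dense_iff]
  intro w ε hε
  obtain ⟨C, hC⟩ : ∃ C : ℝ, C = ∑ k ∈ Finset.range (P.natDegree + 1), ‖P.coeff k‖ := ⟨_, rfl⟩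
  have hC0 : 0 ≤ C := hC ▸ Finset.sum_nonneg fun _ _ => norm_nonneg _
  obtain ⟨l, hl⟩ := hy.exists_dist_lt (c⁻¹ • w) (ε := ε / (2 * ‖c‖)) (by positivity)
  obtain ⟨M', hM'⟩ := exists_nat_one_div_lt (show 0 < ε / (2 * (C + 1)) by positivity)
  obtain ⟨M, hM⟩ : ∃ M, M = max M' P.natDegree := ⟨_, rfl⟩
  have hMε : 1 / ((M : ℝ) + 1) < ε / (2 * (C + 1)) := by
    refine lt_of_le_of_lt ?_ hM'
    have : (M' : ℝ) ≤ M := by exact_mod_cast hM ▸ le_max_left _ _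
    gcongr
  obtain ⟨N, hN1, hN2⟩ := Set.mem_iInter.1 hfG (m, M, l)
  dsimp only at hN1 hN2
  refine ⟨(B ^ N) h, ?_, N, rfl⟩
  set η := 1 / ((M : ℝ) + 1) with hη
  have hη0 : 0 < η := by positivity
  have hmem : m ∈ Finset.range (P.natDegree + 1) :=
    Finset.mem_range.2 (Nat.lt_succ_of_le P.natTrailingDegree_le_natDegree)
  have hsplit : (B ^ N) h - w = ∑ k ∈ Finset.range (P.natDegree + 1),
      P.coeff k • ((B ^ N) (lpPow f k) - if k = m then c⁻¹ • w else 0) := by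
    simp only [smul_sub, Finset.sum_sub_distrib]
    congr 1
    · rw [hh, map_sum]
      simp only [map_smul]
    · rw [Finset.sum_eq_single_of_mem m hmem (by intro k _ hk; simp [hk])]
      simp [← hcdef, smul_smul, hc]
  rw [mem_ball_iff_norm, hsplit]
  have hbound : ∀ k ∈ Finset.range (P.natDegree + 1),
      ‖P.coeff k • ((B ^ N) (lpPow f k) - if k = m then c⁻¹ • w else 0)‖
        ≤ ‖P.coeff k‖ * η + if k = m then ε / 2 else 0 := by
    intro k hk
    rw [norm_smul]
    rcases lt_trichotomy k m with hkm | rfl | hkm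
    · simp [Polynomial.coeff_eq_zero_of_lt_natTrailingDegree hkm, hkm.ne]
    · simp only [if_true]
      have h1 : ‖(B ^ N) (lpPow f m) - c⁻¹ • w‖ ≤ η + ε / (2 * ‖c‖) := by
        rw [← sub_add_sub_cancel _ (y l)]
        refine (norm_add_le _ _).trans (add_le_add hN1.le ?_)
        rw [← dist_eq_norm, dist_comm]
        exact hl.le
      calc ‖c‖ * ‖(B ^ N) (lpPow f m) - c⁻¹ • w‖ ≤ ‖c‖ * (η + ε / (2 * ‖c‖)) := by gcongr
        _ = ‖c‖ * η + ε / 2 := by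
          have := norm_ne_zero_iff.2 hc
          field_simp
    · rw [if_neg hkm.ne', if_neg hkm.ne', sub_zero, add_zero]
      have hkM : k ≤ M := (Nat.lt_succ_iff.1 (Finset.mem_range.1 hk)).trans (hM ▸ le_max_right _ _)
      gcongr
      exact (hN2 k (Finset.mem_Ioc.2 ⟨hkm, hkM⟩)).le
  calc _ ≤ ∑ k ∈ Finset.range (P.natDegree + 1),
          (‖P.coeff k‖ * η + if k = m then ε / 2 else 0) := norm_sum_le_of_le _ hbound
    _ = C * η + ε / 2 := by
      rw [Finset.sum_add_distrib, ← Finset.sum_mul, ← hC, Finset.sum_ite_eq' _ m, if_pos hmem]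
    _ < ε := by
      have : C * η < ε / 2 := by
        calc C * η < (C + 1) * η := by linarith
          _ ≤ (C + 1) * (ε / (2 * (C + 1))) := by gcongr
          _ = ε / 2 := by field_simp
      linarith

/-- A sufficient condition for the criterion of `exists_hypercyclic_generator`: each vertex `v` has
descendants `D k v`, escaping to infinity, whose weights `W k v` relative to `v` tend to
infinity. -/
theorem dense_setOf_lpPow_approx [DecidableEq A] (hp : p ≠ ∞)
    (B : lp (fun _ : A => ℂ) p →L[ℂ] lp (fun _ : A => ℂ) p)
    (D : ℕ → A → A) (W : ℕ → A → ℂ) (n : ℕ → ℕ)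
    (hBD : ∀ k v c, (B ^ n k) (lp.single p (D k v) c) = lp.single p v (W k v * c))
    (hB0 : ∀ v c, ∀ᶠ k in atTop, (B ^ n k) (lp.single p v c) = 0)
    (hDinj : ∀ k, (D k).Injective) (hD : ∀ u v, ∀ᶠ k in atTop, D k v ≠ u)
    (hW : ∀ v, Tendsto (fun k => ‖W k v‖) atTop atTop)
    (m M : ℕ) (w : lp (fun _ : A => ℂ) p) {δ : ℝ} (hδ : 0 < δ) :
    Dense {f | ∃ N : ℕ, ‖(B ^ N) (lpPow f m) - w‖ < δ ∧
        ∀ n ∈ Finset.Ioc m M, ‖(B ^ N) (lpPow f n)‖ < δ} := by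
  have hp0 : 0 < p := zero_lt_one.trans_le Fact.out
  rw [Metric.dense_iff]
  intro f ε hε
  obtain ⟨F, hF1, hF2⟩ := ((Metric.tendsto_nhds.1 (lp.hasSum_single hp f) _ (half_pos hε)).and
    (Metric.tendsto_nhds.1 (lp.hasSum_single hp w) _ hδ)).exists
  let a : ℕ → A → ℂ := fun k v => (w v / W k v) ^ (((m + 1 : ℕ) : ℂ)⁻¹)
  have ha : ∀ k v, a k v ^ (m + 1) = w v / W k v :=
    fun k v => Complex.cpow_nat_inv_pow _ m.succ_ne_zero
  have ha0 : ∀ v, Tendsto (fun k => a k v) atTop (𝓝 0) := by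
    intro v
    have h1 : Tendsto (fun k => ‖a k v‖ ^ (m + 1)) atTop (𝓝 0) := by
      simp only [← norm_pow, ha, norm_div]
      exact tendsto_const_nhds.div_atTop (hW v)
    have h2 := h1.rpow_const (p := (((m + 1 : ℕ) : ℝ)⁻¹)) (Or.inr (by positivity))
    rw [Real.zero_rpow (by positivity)] at h2
    refine tendsto_zero_iff_norm_tendsto_zero.2 (h2.congr fun k => ?_)
    exact Real.pow_rpow_inv_natCast (norm_nonneg _) m.succ_ne_zero
  have hsum : ∀ (φ : ℕ → A → A) (b : ℕ → A → ℂ), (∀ v, Tendsto (fun k => b k v) atTop (𝓝 0)) →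
      Tendsto (fun k => (∑ v ∈ F, lp.single p (φ k v) (b k v) : lp (fun _ : A => ℂ) p))
        atTop (𝓝 0) := by
    intro φ b hb
    rw [← Finset.sum_const_zero (s := F)]
    refine tendsto_finsetSum _ fun v _ => tendsto_zero_iff_norm_tendsto_zero.2 ?_
    simp only [lp.norm_single hp0]
    exact tendsto_zero_iff_norm_tendsto_zero.1 (hb v)
  obtain ⟨x, hx⟩ : ∃ x : lp (fun _ : A => ℂ) p, x = ∑ v ∈ F, lp.single p v (f v) := ⟨_, rfl⟩
  let z : ℕ → lp (fun _ : A => ℂ) p := fun k => ∑ v ∈ F, lp.single p (D k v) (a k v)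
  have hWne : ∀ᶠ k in atTop, ∀ v ∈ F, W k v ≠ 0 :=
    (eventually_all_finset F).2 fun v _ => by
      filter_upwards [(hW v).eventually_gt_atTop 0] with k hk using norm_pos_iff.1 hk
  have hDF : ∀ᶠ k in atTop, ∀ u ∈ F, ∀ v ∈ F, D k v ≠ u :=
    (eventually_all_finset F).2 fun u _ => (eventually_all_finset F).2 fun v _ => hD u v
  have hpow : ∀ q, ∀ᶠ k in atTop, (B ^ n k) (lpPow (x + z k) q)
      = ∑ v ∈ F, lp.single p v (W k v * a k v ^ (q + 1)) := by
    intro q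
    filter_upwards [hDF, (eventually_all_finset F).2 fun v _ => hB0 v (f v ^ (q + 1))]
      with k hk hk0
    rw [lpPow_add_of_disjoint, hx, lpPow_sum_single (φ := fun v => v) Function.injective_id,
      lpPow_sum_single (hDinj k), map_add, map_sum, map_sum, Finset.sum_eq_zero hk0, zero_add]
    · exact Finset.sum_congr rfl fun v _ => hBD _ _ _
    · intro u
      by_cases hu : u ∈ F
      · exact Or.inr (sum_single_apply_eq_zero F _ _ (hk u hu))
      · rw [hx]
        exact Or.inl (sum_single_apply_eq_zero F id _ fun v hv h => hu (h ▸ hv))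
  have hsmall : ∀ q ∈ Finset.Ioc m M, ∀ᶠ k in atTop, ‖(B ^ n k) (lpPow (x + z k) q)‖ < δ := by
    intro q hq
    obtain ⟨d, rfl⟩ := Nat.exists_eq_add_of_lt (Finset.mem_Ioc.1 hq).1
    have h1 := hsum (fun _ v => v) (fun k v => w v * a k v ^ (d + 1)) fun v => by
      simpa using ((ha0 v).pow (d + 1)).const_mul (w v)
    have h2 := (tendsto_zero_iff_norm_tendsto_zero.1 h1).eventually_lt_const hδ
    filter_upwards [h2, hpow (m + d + 1), hWne] with k hk hk' hk0
    rw [hk']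
    refine lt_of_eq_of_lt (congrArg norm (Finset.sum_congr rfl fun v hv => ?_)) hk
    rw [show m + d + 1 + 1 = (m + 1) + (d + 1) by ring, pow_add, ha, ← mul_assoc,
      mul_div_cancel₀ _ (hk0 v hv)]
  have hz := (tendsto_zero_iff_norm_tendsto_zero.1 (hsum D a ha0)).eventually_lt_const
    (half_pos hε)
  obtain ⟨k, hk1, hk2, hk3, hk4⟩ :=
    (hz.and ((hpow m).and (hWne.and ((eventually_all_finset _).2 hsmall)))).exists
  refine ⟨x + z k, ?_, n k, ?_, hk4⟩
  · rw [mem_ball_iff_norm, add_sub_right_comm]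
    refine (norm_add_le _ _).trans_lt ?_
    rw [dist_eq_norm, ← hx] at hF1
    linarith
  · rw [hk2, ← dist_eq_norm]
    refine lt_of_eq_of_lt (congrArg (dist · w) (Finset.sum_congr rfl fun v hv => ?_)) hF2
    rw [ha, mul_div_cancel₀ _ (hk3 v hv)]

end Criterion

namespace DirTree

theorem wt_add {A : Type*} (T : DirTree A) (lam : A → ℂ) (m n : ℕ) (u : A) :
    T.wt lam (m + n) u = T.wt lam m u * T.wt lam n (T.par^[m] u) := by
  simp only [wt, Finset.prod_range_add, ← Function.iterate_add_apply, add_comm]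

namespace IsWBS

variable {A : Type*} [DecidableEq A] {T : DirTree A} {lam : A → ℂ} {p : ℝ≥0∞} [Fact (1 ≤ p)]
  {B : lp (fun _ : A => ℂ) p →L[ℂ] lp (fun _ : A => ℂ) p}

theorem map_single_root (hB : T.IsWBS lam B) (c : ℂ) : B (lp.single p T.root c) = 0 := by
  ext v
  rw [hB]
  simp only [lp.coeFn_zero, Pi.zero_apply]
  refine (tsum_congr fun u => ?_).trans tsum_zero
  rw [lp.single_apply_ne p _ _ u.2.1, mul_zero]

theorem map_single (hB : T.IsWBS lam B) {u : A} (hu : u ≠ T.root) (c : ℂ) :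
    B (lp.single p u c) = lp.single p (T.par u) (lam u * c) := by
  ext v
  rw [hB]
  rcases eq_or_ne v (T.par u) with rfl | hv
  · rw [lp.single_apply_self, tsum_eq_single ⟨u, hu, rfl⟩, lp.single_apply_self]
    intro w hw
    rw [lp.single_apply_ne p _ _ fun h => hw (Subtype.ext h), mul_zero]
  · rw [lp.single_apply_ne p _ _ hv]
    refine (tsum_congr fun w => ?_).trans tsum_zero
    rw [lp.single_apply_ne p _ _ (by rintro rfl; exact hv w.2.2.symm), mul_zero]

theorem pow_map_single (hB : T.IsWBS lam B) {n : ℕ} {u : A} (hu : ∀ k < n, T.par^[k] u ≠ T.root)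
    (c : ℂ) :
    (B ^ n) (lp.single p u c) = lp.single p (T.par^[n] u) (T.wt lam n u * c) := by
  induction n with
  | zero => simp [wt]
  | succ n ih =>
    rw [pow_succ', mul_apply_eq_comp, ih fun k hk => hu k (hk.trans n.lt_succ_self),
      hB.map_single (hu n n.lt_succ_self), Function.iterate_succ_apply', wt, wt,
      Finset.prod_range_succ]
    congr 1
    ring

theorem pow_succ_map_single_eq_zero (hB : T.IsWBS lam B) {n : ℕ} {u : A}
    (hu : T.par^[n] u = T.root) (c : ℂ) : (B ^ (n + 1)) (lp.single p u c) = 0 := by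
  induction n generalizing u c with
  | zero =>
    obtain rfl : u = T.root := hu
    simp [hB.map_single_root]
  | succ n ih =>
    rw [pow_succ, mul_apply_eq_comp]
    by_cases h : u = T.root
    · rw [h, hB.map_single_root, map_zero]
    · rw [hB.map_single h, ih hu]

theorem eventually_pow_map_single_eq_zero (hB : T.IsWBS lam B) (u : A) (c : ℂ) :
    ∀ᶠ n : ℕ in atTop, (B ^ n) (lp.single p u c) = 0 := by
  obtain ⟨m, hm⟩ := T.reaches u
  filter_upwards [eventually_ge_atTop (m + 1)] with n hn
  obtain ⟨d, rfl⟩ := Nat.exists_eq_add_of_le' hn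
  rw [pow_add, mul_apply_eq_comp, hB.pow_succ_map_single_eq_zero hm, map_zero]

end IsWBS

end DirTree

theorem combPar_iterate_some (i j n : ℕ) : combPar^[n] (some (i, j + n)) = some (i, j) := by
  induction n with
  | zero => rfl
  | succ n ih => exact ih

/-- The descendant of order `n ≥ 1` of a vertex of the comb; for the root, the one on the
branch `0`. -/
def combDesc (n : ℕ) : Option (ℕ × ℕ) → Option (ℕ × ℕ)
  | none => some (0, n - 1)
  | some (i, j) => some (i, j + n)

theorem combPar_iterate_combDesc {n : ℕ} (hn : 0 < n) (v : Option (ℕ × ℕ)) :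
    combPar^[n] (combDesc n v) = v := by
  match v, n, hn with
  | none, n + 1, _ =>
    have h := congrArg combPar (combPar_iterate_some 0 0 n)
    rw [zero_add] at h
    rw [Function.iterate_succ_apply', combDesc]
    exact h
  | some (i, j), n, _ => exact combPar_iterate_some i j n

theorem combPar_iterate_combDesc_ne {n k : ℕ} (hk : k < n) (v : Option (ℕ × ℕ)) :
    combPar^[k] (combDesc n v) ≠ none := by
  match v with
  | none =>
    obtain ⟨d, hd⟩ := Nat.exists_eq_add_of_le' (Nat.le_sub_one_of_lt hk)
    rw [combDesc, hd, combPar_iterate_some]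
    exact Option.some_ne_none _
  | some (i, j) =>
    obtain ⟨d, rfl⟩ := Nat.exists_eq_add_of_le' hk.le
    rw [combDesc, ← add_assoc, combPar_iterate_some]
    exact Option.some_ne_none _

theorem combDesc_injective {n : ℕ} (hn : 0 < n) : (combDesc n).Injective :=
  Function.LeftInverse.injective (combPar_iterate_combDesc hn)

theorem eventually_combDesc_ne (u v : Option (ℕ × ℕ)) : ∀ᶠ n in atTop, combDesc n v ≠ u := by
  match u, v with
  | none, none => exact .of_forall fun n => Option.some_ne_none _
  | none, some (i, j) => exact .of_forall fun n => Option.some_ne_none _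
  | some (i, j), none =>
    filter_upwards [eventually_gt_atTop (j + 1)] with n hn h
    simp only [combDesc, Option.some.injEq, Prod.mk.injEq] at h
    omega
  | some (i, j), some (i', j') =>
    filter_upwards [eventually_gt_atTop j] with n hn h
    simp only [combDesc, Option.some.injEq, Prod.mk.injEq] at h
    omega

section Comb

variable {T : DirTree (Option (ℕ × ℕ))} {lam : Option (ℕ × ℕ) → ℂ} {αs βs : ℕ → ℂ}

theorem some_mem_comb_chi_iff (hroot : T.root = none) (hpar : T.par = combPar) {i j : ℕ}
    {u : Option (ℕ × ℕ)} : u ∈ T.chi (some (i, j)) ↔ u = some (i, j + 1) := by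
  rw [DirTree.chi, hroot, hpar]
  rcases u with _ | ⟨i', _ | j'⟩ <;> simp [combPar]

theorem combDesc_mem_chiIter (hroot : T.root = none) (hpar : T.par = combPar) {n : ℕ} (hn : 0 < n)
    (v : Option (ℕ × ℕ)) : combDesc n v ∈ T.chiIter n v := by
  have hstep : ∀ {m : ℕ} {i j : ℕ} {w}, some (i, j) ∈ T.chiIter m w →
      some (i, j + 1) ∈ T.chiIter (m + 1) w := fun h =>
    Set.mem_biUnion h ((some_mem_comb_chi_iff hroot hpar).2 rfl)
  match v with
  | none =>
    obtain ⟨n, rfl⟩ := Nat.exists_eq_add_of_lt hn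
    induction n with
    | zero =>
      refine Set.mem_biUnion (x := none) (by simp [DirTree.chiIter]) ?_
      simp [DirTree.chi, hroot, hpar, combDesc, combPar]
    | succ n ih => exact hstep (ih (by omega))
  | some (i, j) =>
    clear hn
    induction n with
    | zero => simp [combDesc, DirTree.chiIter]
    | succ n ih => exact hstep ih

theorem wt_comb_mul (hpar : T.par = combPar)
    (hfact : ∀ i j : ℕ, T.wt lam (j + 1) (some (i, j)) = αs i * βs (j + 1)) (i j n : ℕ) :
    T.wt lam n (some (i, j + n)) * (αs i * βs (j + 1)) = αs i * βs (n + (j + 1)) := by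
  have h := T.wt_add lam n (j + 1) (some (i, j + n))
  rw [hpar, combPar_iterate_some, hfact i j, show n + (j + 1) = j + n + 1 by ring,
    hfact i (j + n)] at h
  rw [show n + (j + 1) = j + n + 1 by ring]
  exact h.symm

theorem mul_ne_zero_of_comb (hlam : ∀ v, lam v ≠ 0)
    (hfact : ∀ i j : ℕ, T.wt lam (j + 1) (some (i, j)) = αs i * βs (j + 1)) (i j : ℕ) :
    αs i ≠ 0 ∧ βs (j + 1) ≠ 0 := by
  rw [← mul_ne_zero_iff, ← hfact]
  exact Finset.prod_ne_zero_iff.2 fun _ _ => hlam _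

theorem norm_wt_comb (hpar : T.par = combPar) (hlam : ∀ v, lam v ≠ 0)
    (hfact : ∀ i j : ℕ, T.wt lam (j + 1) (some (i, j)) = αs i * βs (j + 1)) (i j n : ℕ) :
    ‖T.wt lam n (some (i, j + n))‖ = ‖βs (n + (j + 1))‖ / ‖βs (j + 1)‖ := by
  obtain ⟨hα, hβ⟩ := mul_ne_zero_of_comb hlam hfact i j
  rw [← norm_div, eq_div_of_mul_eq (mul_ne_zero hα hβ) (wt_comb_mul hpar hfact i j n),
    mul_div_mul_left _ _ hα]

theorem tendsto_norm_wt_combDesc (hpar : T.par = combPar) (hlam : ∀ v, lam v ≠ 0)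
    (hfact : ∀ i j : ℕ, T.wt lam (j + 1) (some (i, j)) = αs i * βs (j + 1))
    {n : ℕ → ℕ} (hn : ∀ k, 0 < n k)
    (hβ : ∀ j, Tendsto (fun k => ‖βs (n k + j)‖) atTop atTop) (v : Option (ℕ × ℕ)) :
    Tendsto (fun k => ‖T.wt lam (n k) (combDesc (n k) v)‖) atTop atTop := by
  match v with
  | none =>
    have hα := (mul_ne_zero_of_comb hlam hfact 0 0).1
    refine ((hβ 0).const_mul_atTop (norm_pos_iff.2 hα)).congr fun k => ?_
    obtain ⟨m, hm⟩ := Nat.exists_eq_add_of_lt (hn k)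
    rw [hm, zero_add, combDesc, add_tsub_cancel_right, hfact, norm_mul, add_zero]
  | some (i, j) =>
    have hβ0 := (mul_ne_zero_of_comb hlam hfact 0 j).2
    refine ((hβ (j + 1)).atTop_div_const (norm_pos_iff.2 hβ0)).congr fun k => ?_
    exact (norm_wt_comb hpar hlam hfact i j (n k)).symm

variable {p : ℝ≥0∞} [Fact (1 ≤ p)]
  {B : lp (fun _ : Option (ℕ × ℕ) => ℂ) p →L[ℂ] lp (fun _ : Option (ℕ × ℕ) => ℂ) p}

theorem pow_apply_some (hroot : T.root = none) (hpar : T.par = combPar) (hB : T.IsWBS lam B)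
    (n i j : ℕ) (f : lp (fun _ : Option (ℕ × ℕ) => ℂ) p) :
    (B ^ n) f (some (i, j)) = T.wt lam n (some (i, j + n)) * f (some (i, j + n)) := by
  induction n generalizing j with
  | zero => simp [DirTree.wt]
  | succ n ih =>
    rw [pow_succ', mul_apply_eq_comp, hB,
      tsum_eq_single ⟨some (i, j + 1), (some_mem_comb_chi_iff hroot hpar).2 rfl⟩, ih,
      show j + 1 + n = j + (n + 1) by ring, ← mul_assoc]
    · congr 1
      rw [DirTree.wt_add, show j + (n + 1) = j + 1 + n by ring, hpar, combPar_iterate_some,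
        mul_comm]
      simp [DirTree.wt]
    · exact fun u hu => absurd (Subtype.ext ((some_mem_comb_chi_iff hroot hpar).1 u.2)) hu

theorem exists_tendsto_norm_of_hypercyclic (hroot : T.root = none) (hpar : T.par = combPar)
    (hlam : ∀ v, lam v ≠ 0)
    (hfact : ∀ i j : ℕ, T.wt lam (j + 1) (some (i, j)) = αs i * βs (j + 1))
    (hB : T.IsWBS lam B) {f : lp (fun _ : Option (ℕ × ℕ) => ℂ) p}
    (hf : Dense (Set.range fun n : ℕ => (B ^ n) f)) :
    ∃ n : ℕ → ℕ, StrictMono n ∧ (∀ k, 0 < n k) ∧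
      ∀ j, Tendsto (fun k => ‖βs (n k + j)‖) atTop atTop := by
  have key : ∀ k : ℕ, ∃ n > k, ∀ j ≤ k, (k : ℝ) ≤ ‖βs (n + j)‖ := by
    intro k
    obtain ⟨R, hR⟩ : ∃ R : ℝ, R = k + ∑ l ∈ Finset.range (k + 1), ‖βs l‖ + 1 := ⟨_, rfl⟩
    have hsum0 : 0 ≤ ∑ l ∈ Finset.range (k + 1), ‖βs l‖ :=
      Finset.sum_nonneg fun _ _ => norm_nonneg _
    have hkR : (k : ℝ) ≤ R := by linarith
    have hR0 : 0 < R := by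
      have : (0 : ℝ) ≤ k := k.cast_nonneg
      linarith
    let c : ℕ → ℝ := fun j => R * (‖f‖ + 1) / ‖βs (j + 1)‖ + 1
    let g : lp (fun _ : Option (ℕ × ℕ) => ℂ) p :=
      ∑ j ∈ Finset.range (k + 1), lp.single p (some (0, j)) (c j : ℂ)
    have hg : ∀ j ≤ k, g (some (0, j)) = c j := by
      intro j hj
      simp only [g]
      rw [lp.coeFn_sum, Finset.sum_apply,
        Finset.sum_eq_single_of_mem j (Finset.mem_range.2 (Nat.lt_succ_of_le hj)),
        lp.single_apply_self]
      exact fun l _ hl => lp.single_apply_ne p _ _ (by simpa using hl.symm)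
    obtain ⟨_, ⟨N, rfl⟩, hN⟩ := hf.exists_dist_lt g one_pos
    have hlarge : ∀ j ≤ k, R ≤ ‖βs (N + 1 + j)‖ := by
      intro j hj
      have hβ := norm_pos_iff.2 (mul_ne_zero_of_comb hlam hfact 0 j).2
      by_contra! hlt
      have h1 : ‖g (some (0, j)) - (B ^ N) f (some (0, j))‖ < 1 := by
        rw [dist_eq_norm] at hN
        exact (lp.norm_apply_le_norm (zero_lt_one.trans_le Fact.out).ne' (g - (B ^ N) f)
          (some (0, j))).trans_lt hN
      have h2 := norm_sub_norm_le (g (some (0, j))) ((B ^ N) f (some (0, j)))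
      rw [hg j hj, pow_apply_some hroot hpar hB, norm_mul, norm_wt_comb hpar hlam hfact,
        Complex.norm_real, Real.norm_of_nonneg (by positivity)] at h2
      rw [hg j hj, pow_apply_some hroot hpar hB] at h1
      have h3 : ‖βs (N + (j + 1))‖ / ‖βs (j + 1)‖ * ‖f (some (0, j + N))‖
          ≤ R * (‖f‖ + 1) / ‖βs (j + 1)‖ := by
        rw [div_mul_eq_mul_div, show N + (j + 1) = N + 1 + j by ring]
        gcongr
        exact (lp.norm_apply_le_norm (zero_lt_one.trans_le Fact.out).ne' f _).trans
          (le_add_of_nonneg_right zero_le_one)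
      simp only [c] at h1 h2
      linarith
    refine ⟨N + 1, ?_, fun j hj => hkR.trans (hlarge j hj)⟩
    by_contra! hle
    have h1 := hlarge 0 k.zero_le
    have h2 := Finset.single_le_sum (f := fun l => ‖βs l‖) (fun _ _ => norm_nonneg _)
      (Finset.mem_range.2 (Nat.lt_succ_of_le hle))
    have : (0 : ℝ) ≤ k := k.cast_nonneg
    rw [add_zero] at h1
    linarith
  obtain ⟨n, hn, hP⟩ := extraction_forall_of_frequently
    (P := fun k n => 0 < n ∧ ∀ j ≤ k, (k : ℝ) ≤ ‖βs (n + j)‖) fun k =>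
      frequently_atTop.2 fun a => by
        obtain ⟨n, hn, h⟩ := key (max k a)
        refine ⟨n, by omega, by omega, fun j hj => ?_⟩
        exact le_trans (by exact_mod_cast le_max_left _ _) (h j (hj.trans (le_max_left _ _)))
  refine ⟨n, hn, fun k => (hP k).1, fun j => ?_⟩
  refine tendsto_atTop_mono' atTop ?_ tendsto_natCast_atTop_atTop
  filter_upwards [eventually_ge_atTop j] with k hk using (hP k).2 j hk

theorem summable_norm_rpow_of_comb (hroot : T.root = none) (hpar : T.par = combPar)
    (hlam : ∀ v, lam v ≠ 0)
    (hfact : ∀ i j : ℕ, T.wt lam (j + 1) (some (i, j)) = αs i * βs (j + 1))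
    (hp1 : 1 < p) (hp2 : p ≠ ∞) (hB : T.IsWBS lam B) :
    Summable fun i => ‖αs i‖ ^ (p.toReal / (p.toReal - 1)) := by
  have hp : 1 < p.toReal := by
    rwa [← ENNReal.toReal_one, ENNReal.toReal_lt_toReal ENNReal.one_ne_top hp2]
  have hpq : p.toReal.HolderConjugate (p.toReal / (p.toReal - 1)) :=
    Real.HolderConjugate.conjExponent hp
  obtain ⟨q, hq⟩ : ∃ q, q = p.toReal / (p.toReal - 1) := ⟨_, rfl⟩
  rw [← hq] at hpq ⊢
  have hp0 : p ≠ 0 := (zero_lt_one.trans hp1).ne'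
  have hβ : 0 < ‖βs 1‖ := norm_pos_iff.2 (mul_ne_zero_of_comb hlam hfact 0 0).2
  have hα : ∀ i, αs i ≠ 0 := fun i => (mul_ne_zero_of_comb hlam hfact i 0).1
  refine summable_of_sum_le (c := (‖B‖ / ‖βs 1‖) ^ q) (fun i => by positivity) fun s => ?_
  obtain ⟨g, hg1, hg2⟩ := (NNReal.isGreatest_Lp s (fun i => ‖αs i‖₊) hpq.symm).1
  obtain ⟨c, hc⟩ : ∃ c : ℕ → ℂ, ∀ i, c i = g i * (‖αs i‖ / αs i) := ⟨_, fun _ => rfl⟩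
  have hcnorm : ∀ i, ‖c i‖ = g i := fun i => by
    simp [hc, hα i]
  have hαc : ∀ i, αs i * c i = (‖αs i‖ * g i : ℝ) := fun i => by
    have := hα i
    rw [hc]
    push_cast
    field_simp
  let f : lp (fun _ : Option (ℕ × ℕ) => ℂ) p := ∑ i ∈ s, lp.single p (some (i, 0)) (c i)
  have hf : ‖f‖ ≤ 1 := by
    have hinj : Function.Injective fun i : ℕ => (some (i, 0) : Option (ℕ × ℕ)) := fun i i' h => by
      simpa using h
    have h1 := lp.norm_sum_single (p := p) (hpq.pos)
      (fun v : Option (ℕ × ℕ) => v.elim 0 fun w => c w.1) (s.map ⟨_, hinj⟩)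
    simp only [Finset.sum_map, Function.Embedding.coeFn_mk, Option.elim_some, hcnorm] at h1
    have h2 : ‖f‖ ^ p.toReal ≤ 1 := by
      rw [h1]
      exact_mod_cast hg1
    rwa [← Real.one_rpow p.toReal,
      Real.rpow_le_rpow_iff (norm_nonneg _) zero_le_one hpq.pos] at h2
  have hBf : B f = lp.single p none (βs 1 * (∑ i ∈ s, ‖αs i‖ * g i : ℝ)) := by
    have hlam1 : ∀ i, lam (some (i, 0)) = αs i * βs 1 := fun i => by
      rw [← hfact i 0]
      simp [DirTree.wt]
    have hsingle : ∀ i, B (lp.single p (some (i, 0)) (c i))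
        = lp.single p none (βs 1 * (‖αs i‖ * g i : ℝ)) := fun i => by
      rw [hB.map_single (by simp [hroot]), hpar, ← hαc, hlam1, mul_right_comm, mul_comm]
      rfl
    simp only [f, map_sum, hsingle]
    rw [Complex.ofReal_sum, Finset.mul_sum]
    exact (map_sum (lp.singleAddMonoidHom (E := fun _ : Option (ℕ × ℕ) => ℂ) p none) _ _).symm
  have hle : ‖βs 1‖ * ∑ i ∈ s, ‖αs i‖ * g i ≤ ‖B‖ := by
    have h := (B.le_opNorm f).trans (mul_le_of_le_one_right (norm_nonneg _) hf)
    rwa [hBf, lp.norm_single (zero_lt_one.trans hp1), norm_mul, Complex.norm_real,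
      Real.norm_of_nonneg (by positivity)] at h
  have hLp : ∑ i ∈ s, ‖αs i‖ * g i = (∑ i ∈ s, ‖αs i‖ ^ q) ^ (1 / q) := by
    simpa only [NNReal.coe_sum, NNReal.coe_mul, NNReal.coe_rpow, coe_nnnorm] using
      congrArg NNReal.toReal hg2
  have hS : 0 ≤ ∑ i ∈ s, ‖αs i‖ ^ q := Finset.sum_nonneg fun _ _ => by positivity
  have hfin := Real.rpow_le_rpow (by positivity) ((le_div_iff₀' hβ).2 hle) hpq.symm.pos.le
  rwa [hLp, ← Real.rpow_mul hS, one_div_mul_cancel hpq.symm.ne_zero, Real.rpow_one] at hfin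

end Comb

/-- Let `A` be the comb tree and let `λ` be a weight with
`λ(r→u_{i,j}) = α_i β_j`, such that the weighted backward shift `B` is bounded on
`ℓ^p(A)`, `1 < p < ∞`. If `B` is hypercyclic then `(α_i) ∈ ℓ^{p*}`, there is an
increasing sequence `(n_k)` along which `|β_{n_k}| → ∞` and
`|λ(u_{i,j}→u_{i,j+n_k})| → ∞` for all `i, j`, and consequently
`sup_{u ∈ Chi^{n_k}(v)} |λ(v→u)| → ∞` for every vertex `v`; hence `B` is hypercyclic if
and only if it has a hypercyclic algebra for the coordinatewise product. -/
theorem stmt15 (T : DirTree (Option (ℕ × ℕ))) (hroot : T.root = none)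
    (hpar : T.par = combPar)
    (lam : Option (ℕ × ℕ) → ℂ) (hlam : ∀ v, lam v ≠ 0)
    (αs βs : ℕ → ℂ)
    (hfact : ∀ i j : ℕ, T.wt lam (j + 1) (some (i, j)) = αs i * βs (j + 1))
    (p : ℝ≥0∞) [Fact (1 ≤ p)] (hp1 : 1 < p) (hp2 : p ≠ ∞)
    (B : lp (fun _ : Option (ℕ × ℕ) => ℂ) p →L[ℂ] lp (fun _ : Option (ℕ × ℕ) => ℂ) p)
    (hB : T.IsWBS lam B) :
    ((∃ f, Dense (Set.range fun n : ℕ => (B ^ n) f)) →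
      Summable (fun i : ℕ => ‖αs i‖ ^ (p.toReal / (p.toReal - 1))) ∧
      ∃ n : ℕ → ℕ, StrictMono n ∧ (∀ k, 0 < n k) ∧
        Tendsto (fun k : ℕ => ‖βs (n k)‖) atTop atTop ∧
        (∀ i j : ℕ,
          Tendsto (fun k : ℕ => ‖T.wt lam (n k) (some (i, j + n k))‖) atTop atTop) ∧
        (∀ v : Option (ℕ × ℕ),
          Tendsto (fun k : ℕ => ⨆ u ∈ T.chiIter (n k) v, (‖T.wt lam (n k) u‖₊ : ℝ≥0∞))
            atTop (𝓝 ⊤))) ∧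
    ((∃ f, Dense (Set.range fun n : ℕ => (B ^ n) f)) ↔
      ∃ S : Set (lp (fun _ : Option (ℕ × ℕ) => ℂ) p),
        (∃ f ∈ S, f ≠ 0) ∧
        (∀ f ∈ S, ∀ g ∈ S, f + g ∈ S) ∧
        (∀ c : ℂ, ∀ f ∈ S, c • f ∈ S) ∧
        (∀ f ∈ S, ∀ g ∈ S, ∃ h ∈ S, ∀ v : Option (ℕ × ℕ),
          (h : ∀ _ : Option (ℕ × ℕ), ℂ) v
            = (f : ∀ _ : Option (ℕ × ℕ), ℂ) v * (g : ∀ _ : Option (ℕ × ℕ), ℂ) v) ∧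
        (∀ f ∈ S, f ≠ 0 → Dense (Set.range fun n : ℕ => (B ^ n) f))) := by
  constructor
  · rintro ⟨f, hf⟩
    refine ⟨summable_norm_rpow_of_comb hroot hpar hlam hfact hp1 hp2 hB, ?_⟩
    obtain ⟨n, hn, hn0, hβ⟩ := exists_tendsto_norm_of_hypercyclic hroot hpar hlam hfact hB hf
    have hW := tendsto_norm_wt_combDesc hpar hlam hfact hn0 hβ
    refine ⟨n, hn, hn0, hβ 0, fun i j => hW (some (i, j)), fun v => ?_⟩
    have h : Tendsto (fun k => (‖T.wt lam (n k) (combDesc (n k) v)‖₊ : ℝ≥0∞)) atTop (𝓝 ⊤) :=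
      ENNReal.tendsto_coe_nhds_top.2 (NNReal.tendsto_coe_atTop.1 (hW v))
    refine tendsto_nhds_top_mono' h fun k => ?_
    exact le_iSup₂_of_le _ (combDesc_mem_chiIter hroot hpar (hn0 k) v) le_rfl
  · constructor
    · rintro ⟨f₀, hf₀⟩
      obtain ⟨n, hn, hn0, hβ⟩ := exists_tendsto_norm_of_hypercyclic hroot hpar hlam hfact hB hf₀
      have : Nontrivial (lp (fun _ : Option (ℕ × ℕ) => ℂ) p) := by
        refine ⟨lp.single p none 1, 0, fun h => ?_⟩
        have h1 := lp.norm_single (E := fun _ : Option (ℕ × ℕ) => ℂ) (zero_lt_one.trans hp1) none 1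
        rw [h, norm_zero, norm_one] at h1
        exact zero_ne_one h1
      have hBD : ∀ k v c, (B ^ n k) (lp.single p (combDesc (n k) v) c)
          = lp.single p v (T.wt lam (n k) (combDesc (n k) v) * c) := by
        intro k v c
        rw [hB.pow_map_single, hpar, combPar_iterate_combDesc (hn0 k)]
        intro l hl
        rw [hpar, hroot]
        exact combPar_iterate_combDesc_ne hl v
      obtain ⟨f, hf, hP⟩ := exists_hypercyclic_generator B hf₀ fun m M w δ hδ =>
        dense_setOf_lpPow_approx hp2 B (fun k => combDesc (n k))
          (fun k v => T.wt lam (n k) (combDesc (n k) v)) n hBD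
          (fun v c => hn.tendsto_atTop.eventually (hB.eventually_pow_map_single_eq_zero v c))
          (fun k => combDesc_injective (hn0 k))
          (fun u v => hn.tendsto_atTop.eventually (eventually_combDesc_ne u v))
          (tendsto_norm_wt_combDesc hpar hlam hfact hn0 hβ) m M w hδ
      refine ⟨{h | ∃ P : Polynomial ℂ, ∀ v, h v = f v * P.eval (f v)}, ⟨f, ⟨1, by simp⟩, hf⟩,
        ?_, ?_, ?_, fun h ⟨P, hh⟩ h0 => hP P h hh h0⟩
      · rintro g ⟨P, hg⟩ h ⟨Q, hh⟩
        exact ⟨P + Q, fun v => by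
          rw [lp.coeFn_add, Pi.add_apply, hg, hh, Polynomial.eval_add, mul_add]⟩
      · rintro c g ⟨P, hg⟩
        exact ⟨Polynomial.C c * P, fun v => by
          rw [lp.coeFn_smul, Pi.smul_apply, hg, Polynomial.eval_C_mul, smul_eq_mul,
            mul_left_comm]⟩
      · rintro g ⟨P, hg⟩ h ⟨Q, hh⟩
        refine ⟨lpMul p g h, ⟨P * Polynomial.X * Q, fun v => ?_⟩, fun v => lpMul_apply p g h v⟩
        rw [lpMul_apply, hg, hh, Polynomial.eval_mul, Polynomial.eval_mul, Polynomial.eval_X]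
        ring
    · rintro ⟨S, ⟨f, hfS, hf⟩, -, -, -, hS⟩
      exact ⟨f, hS f hfS hf⟩
end

section
/- Let A be a rooted directed tree that contains a fertile vertex v₀, i.e., |Chi^n(v)| → ∞ as n → ∞ for every v in ⋃_{n≥1} Chi^n(v₀). Then for every 1 < p < ∞ there exists a weight λ with 0 < |λ_v| ≤ 2 for all v such that B_λ : ℓ^p(A) → ℓ^p(A) is bounded and mixing, but sup over n of sup_{u∈Chi^n(v₀)} |λ(v₀→u)| < ∞, so B_λ has no hypercyclic algebra. -/
open Filter Topology
open scoped ENNReal NNReal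

namespace DirTree
variable {A : Type*} (T : DirTree A)

theorem mem_chiIter_succ {n : ℕ} {u v : A} :
    u ∈ T.chiIter (n + 1) v ↔ u ≠ T.root ∧ T.par u ∈ T.chiIter n v := by
  simp [chiIter, chi]

theorem mem_chiIter_add {m n : ℕ} {u v w : A} (hv : v ∈ T.chiIter m w)
    (hu : u ∈ T.chiIter n v) : u ∈ T.chiIter (m + n) w := by
  induction n generalizing u with
  | zero =>
    rw [Set.mem_singleton_iff.1 hu]
    exact hv
  | succ n ih =>
    rw [mem_chiIter_succ] at hu
    exact T.mem_chiIter_succ.2 ⟨hu.1, ih hu.2⟩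

theorem induction_par {P : A → Prop} (h0 : P T.root)
    (h : ∀ u, u ≠ T.root → P (T.par u) → P u) (u : A) : P u := by
  obtain ⟨n, hn⟩ := T.reaches u
  induction n generalizing u with
  | zero => exact (show u = T.root from hn) ▸ h0
  | succ n ih =>
    by_cases hu : u = T.root
    · exact hu ▸ h0
    · exact h u hu (ih _ hn)

/-- Recursion along the tree. -/
theorem exists_recursion {R : Type*} (base : R) (step : A → R → R) :
    ∃ a : A → R, a T.root = base ∧ ∀ u, u ≠ T.root → a u = step u (a (T.par u)) := by
  classical
  let aux : ℕ → A → R := fun n => Nat.rec (fun _ => base)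
    (fun _ f u => if u = T.root then base else step u (f (T.par u))) n
  have haux : ∀ n u, T.par^[n] u = T.root → aux n u = aux (n + 1) u := by
    intro n
    induction n with
    | zero =>
      intro u hu
      simp [aux, show u = T.root from hu]
    | succ n ih =>
      intro u hu
      change (if u = T.root then base else step u (aux n (T.par u))) =
        if u = T.root then base else step u (aux (n + 1) (T.par u))
      rw [ih _ hu]
  have hmono : ∀ u n k, T.par^[n] u = T.root → aux (n + k) u = aux n u := by
    intro u n k hn
    induction k with
    | zero => rfl
    | succ k ih =>
      rw [← ih, ← add_assoc, ← haux]
      rw [add_comm, Function.iterate_add_apply, hn]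
      exact Function.iterate_fixed T.par_root k
  choose d hd using T.reaches
  refine ⟨fun u => aux (d u) u, ?_, fun u hu => ?_⟩
  · have h := hmono T.root 0 (d T.root) rfl
    rw [zero_add] at h
    exact h
  · have h1 : T.par^[d (T.par u) + 1] u = T.root := hd (T.par u)
    have h2 := hmono u (d u) (d (T.par u) + 1) (hd u)
    have h3 := hmono u (d (T.par u) + 1) (d u) h1
    rw [add_comm] at h3
    change aux (d u) u = step u (aux (d (T.par u)) (T.par u))
    rw [← h2, h3]
    exact if_neg hu

theorem wt_succ (lam : A → ℂ) (n : ℕ) (u : A) :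
    T.wt lam (n + 1) u = T.wt lam n (T.par u) * lam u := by
  simp [wt, Finset.prod_range_succ']

theorem wt_ne_zero {lam : A → ℂ} (h : ∀ u, lam u ≠ 0) (n : ℕ) (u : A) : T.wt lam n u ≠ 0 :=
  Finset.prod_ne_zero_iff.2 fun _ _ => h _

theorem exists_isWBS {p : ℝ≥0∞} [Fact (1 ≤ p)] {q K : ℝ} (hpq : p.toReal.HolderConjugate q)
    {lam : A → ℂ}
    (hlam : ∀ v, Summable (fun u : T.chi v => ‖lam u‖ ^ q) ∧
      ∑' u : T.chi v, ‖lam u‖ ^ q ≤ K) :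
    ∃ B : lp (fun _ : A => ℂ) p →L[ℂ] lp (fun _ : A => ℂ) p, T.IsWBS lam B := by
  have hp : 0 < p.toReal := hpq.pos
  have hq : 0 < q := hpq.symm.pos
  have hfs (f : lp (fun _ : A => ℂ) p) (v : A) :
      Summable fun u : T.chi v => ‖(f : ∀ _ : A, ℂ) u‖ ^ p.toReal :=
    ((lp.memℓp f).summable hp).subtype _
  have hK : 0 ≤ K := (tsum_nonneg fun _ => by positivity).trans (hlam T.root).2
  have holder (f : lp (fun _ : A => ℂ) p) (v : A) :=
    Real.summable_and_inner_le_Lp_mul_Lq_tsum_of_nonneg hpq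
      (fun u : T.chi v => norm_nonneg ((f : ∀ _ : A, ℂ) u)) (fun u => norm_nonneg (lam u))
      (hfs f v) (hlam v).1
  have hsum (f : lp (fun _ : A => ℂ) p) (v : A) :
      Summable fun u : T.chi v => ‖lam u * (f : ∀ _ : A, ℂ) u‖ := by
    simpa only [norm_mul, mul_comm] using (holder f v).1
  have hbound (f : lp (fun _ : A => ℂ) p) (v : A) :
      ‖∑' u : T.chi v, lam u * (f : ∀ _ : A, ℂ) u‖ ^ p.toReal ≤
        (K ^ (1 / q)) ^ p.toReal * ∑' u : T.chi v, ‖(f : ∀ _ : A, ℂ) u‖ ^ p.toReal := by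
    have hnn : 0 ≤ ∑' u : T.chi v, ‖(f : ∀ _ : A, ℂ) u‖ ^ p.toReal :=
      tsum_nonneg fun _ => by positivity
    have h1 : ‖∑' u : T.chi v, lam u * (f : ∀ _ : A, ℂ) u‖ ≤
        K ^ (1 / q) * (∑' u : T.chi v, ‖(f : ∀ _ : A, ℂ) u‖ ^ p.toReal) ^ (1 / p.toReal) := by
      refine (norm_tsum_le_tsum_norm (hsum f v)).trans ?_
      simp only [norm_mul, mul_comm (‖lam _‖)]
      refine (holder f v).2.trans ?_
      rw [mul_comm]
      have h0 : 0 ≤ ∑' u : T.chi v, ‖lam u‖ ^ q := tsum_nonneg fun _ => by positivity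
      gcongr
      exact (hlam v).2
    refine (Real.rpow_le_rpow (norm_nonneg _) h1 hp.le).trans_eq ?_
    rw [Real.mul_rpow (by positivity) (by positivity), ← Real.rpow_mul hnn,
      one_div_mul_cancel hp.ne', Real.rpow_one]
  have htotal (f : lp (fun _ : A => ℂ) p) (s : Finset A) :
      ∑ v ∈ s, ‖∑' u : T.chi v, lam u * (f : ∀ _ : A, ℂ) u‖ ^ p.toReal ≤
        (K ^ (1 / q) * ‖f‖) ^ p.toReal := by
    refine (Finset.sum_le_sum fun v _ => hbound f v).trans ?_
    rw [← Finset.mul_sum, Real.mul_rpow (by positivity) (by positivity),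
      lp.norm_rpow_eq_tsum hp f]
    refine mul_le_mul_of_nonneg_left ?_ (by positivity)
    rw [← Summable.tsum_finset_bUnion_disjoint (f := fun u => ‖(f : ∀ _ : A, ℂ) u‖ ^ p.toReal)
      (t := T.chi) _ fun v _ => hfs f v]
    · exact Summable.tsum_subtype_le _ _ (fun _ => by positivity) ((lp.memℓp f).summable hp)
    · intro v _ w _ hvw
      exact Set.disjoint_left.2 fun u hu hu' => hvw (hu.2.symm.trans hu'.2)
  let L : lp (fun _ : A => ℂ) p →ₗ[ℂ] lp (fun _ : A => ℂ) p :=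
    { toFun := fun f => ⟨fun v => ∑' u : T.chi v, lam u * (f : ∀ _ : A, ℂ) u,
        memℓp_gen' (htotal f)⟩
      map_add' := fun f g => by
        ext v
        simp only [lp.coeFn_add, Pi.add_apply, mul_add]
        exact (hsum f v).of_norm.tsum_add (hsum g v).of_norm
      map_smul' := fun c f => by
        ext v
        simp only [lp.coeFn_smul, Pi.smul_apply, smul_eq_mul, RingHom.id_apply, ← tsum_mul_left]
        exact tsum_congr fun u => by ring }
  refine ⟨L.mkContinuous (K ^ (1 / q)) fun f => ?_, fun f v => rfl⟩
  exact lp.norm_le_of_forall_sum_le hp (by positivity) (htotal f)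

section Operator

variable [DecidableEq A] {T} {lam : A → ℂ} {p : ℝ≥0∞} [Fact (1 ≤ p)]
  {B : lp (fun _ : A => ℂ) p →L[ℂ] lp (fun _ : A => ℂ) p}

theorem IsWBS.apply_single (hB : T.IsWBS lam B) {u : A} (hu : u ≠ T.root) :
    B (lp.single p u 1) = lam u • lp.single p (T.par u) 1 := by
  ext v
  rw [hB]
  by_cases hv : T.par u = v
  · subst hv
    rw [tsum_eq_single ⟨u, hu, rfl⟩]
    · simp
    · intro w hw
      have : (w : A) ≠ u := fun h => hw (Subtype.ext h)
      simp [this]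
  · rw [lp.coeFn_smul, Pi.smul_apply, lp.single_apply, Pi.single_eq_of_ne (Ne.symm hv), smul_zero]
    refine (tsum_congr fun w => ?_).trans tsum_zero
    have : (w : A) ≠ u := fun h => hv (h ▸ w.2.2)
    simp [this]

theorem IsWBS.apply_single_root (hB : T.IsWBS lam B) : B (lp.single p T.root 1) = 0 := by
  ext v
  rw [hB]
  refine (tsum_congr fun w => ?_).trans tsum_zero
  simp [w.2.1]

theorem IsWBS.pow_single (hB : T.IsWBS lam B) {n : ℕ} {u v : A} (hu : u ∈ T.chiIter n v) :
    (B ^ n) (lp.single p u 1) = T.wt lam n u • lp.single p v 1 := by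
  induction n generalizing u with
  | zero => simp [wt, Set.mem_singleton_iff.1 hu]
  | succ n ih =>
    rw [mem_chiIter_succ] at hu
    rw [pow_succ, mul_apply_eq_comp, hB.apply_single hu.1, map_smul, ih hu.2,
      smul_smul, wt_succ, mul_comm]

theorem IsWBS.pow_single_apply (hB : T.IsWBS lam B) {n : ℕ} {u v : A}
    (hu : u ∉ T.chiIter n v) : ((B ^ n) (lp.single p u 1) : ∀ _ : A, ℂ) v = 0 := by
  induction n generalizing u with
  | zero =>
    have : v ≠ u := fun h => hu (Set.mem_singleton_iff.2 h.symm)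
    simp [this]
  | succ n ih =>
    rw [pow_succ, mul_apply_eq_comp]
    by_cases hr : u = T.root
    · rw [hr, hB.apply_single_root]
      simp
    · rw [hB.apply_single hr, map_smul, lp.coeFn_smul, Pi.smul_apply,
        ih fun h => hu (T.mem_chiIter_succ.2 ⟨hr, h⟩), smul_zero]

theorem IsWBS.eventually_pow_single (hB : T.IsWBS lam B) (u : A) :
    ∀ᶠ n in atTop, (B ^ n) (lp.single p u 1) = 0 := by
  induction u using T.induction_par with
  | h0 =>
    filter_upwards [eventually_ge_atTop 1] with n hn
    obtain ⟨k, rfl⟩ := Nat.exists_eq_add_of_le' hn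
    rw [pow_succ, mul_apply_eq_comp, hB.apply_single_root, map_zero]
  | h u hu ih =>
    obtain ⟨N, hN⟩ := eventually_atTop.1 ih
    filter_upwards [eventually_ge_atTop (N + 1)] with n hn
    obtain ⟨k, rfl⟩ := Nat.exists_eq_add_of_le' (Nat.one_le_of_lt hn)
    rw [pow_succ, mul_apply_eq_comp, hB.apply_single hu, map_smul,
      hN k (Nat.le_of_succ_le_succ hn), smul_zero]

end Operator
end DirTree

section Mixing

variable {E : Type*} [NormedAddCommGroup E] [NormedSpace ℂ E]

/-- The vectors which, for all large `n`, have arbitrarily small preimages under `B ^ n`. -/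
def smallPreimages (B : E →L[ℂ] E) : Submodule ℂ E where
  carrier := {g | ∀ ε > 0, ∀ᶠ n : ℕ in atTop, ∃ f, ‖f‖ < ε ∧ (B ^ n) f = g}
  zero_mem' := fun ε hε => Eventually.of_forall fun n => ⟨0, by simpa using hε, map_zero _⟩
  add_mem' := by
    intro g h hg hh ε hε
    filter_upwards [hg (ε / 2) (half_pos hε), hh (ε / 2) (half_pos hε)]
    rintro n ⟨x, hx, rfl⟩ ⟨y, hy, rfl⟩
    exact ⟨x + y, by linarith [norm_add_le x y], map_add _ _ _⟩
  smul_mem' := by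
    intro c g hg ε hε
    filter_upwards [hg (ε / (‖c‖ + 1)) (by positivity)]
    rintro n ⟨x, hx, rfl⟩
    refine ⟨c • x, ?_, map_smul _ _ _⟩
    rw [lt_div_iff₀ (by positivity)] at hx
    rw [norm_smul]
    nlinarith [norm_nonneg x]

theorem pow_apply_mem_smallPreimages {B : E →L[ℂ] E} {g : E} (hg : g ∈ smallPreimages B) (k : ℕ) :
    (B ^ k) g ∈ smallPreimages B := by
  intro ε hε
  obtain ⟨N, hN⟩ := eventually_atTop.1 (hg ε hε)
  filter_upwards [eventually_ge_atTop (k + N)] with n hn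
  obtain ⟨m, rfl⟩ := Nat.exists_eq_add_of_le ((Nat.le_add_right k N).trans hn)
  obtain ⟨f, hf, rfl⟩ := hN m (by omega)
  exact ⟨f, hf, by rw [pow_add, mul_apply_eq_comp]⟩

/-- A form of Kitai's criterion. -/
theorem mixing_of_dense_span {B : E →L[ℂ] E} {X : Set E}
    (hX : Dense (Submodule.span ℂ X : Set E))
    (h0 : ∀ x ∈ X, ∀ᶠ n : ℕ in atTop, (B ^ n) x = 0) (h1 : X ⊆ smallPreimages B)
    {U V : Set E} (hU : IsOpen U) (hU' : U.Nonempty) (hV : IsOpen V) (hV' : V.Nonempty) :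
    ∃ N : ℕ, ∀ n : ℕ, N ≤ n → ∃ f ∈ U, (B ^ n) f ∈ V := by
  obtain ⟨f, hfU, hf⟩ := hX.inter_open_nonempty U hU hU'
  obtain ⟨g, hgV, hg⟩ := hX.inter_open_nonempty V hV hV'
  replace hf : ∀ᶠ n : ℕ in atTop, (B ^ n) f = 0 := by
    clear hfU
    induction hf using Submodule.span_induction with
    | mem x hx => exact h0 x hx
    | zero => simp
    | add x y _ _ hx hy =>
      filter_upwards [hx, hy] with n hx hy
      rw [map_add, hx, hy, add_zero]
    | smul c x _ hx =>
      filter_upwards [hx] with n hx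
      rw [map_smul, hx, smul_zero]
  obtain ⟨ε, hε, hball⟩ := Metric.isOpen_iff.1 hU f hfU
  refine eventually_atTop.1 ?_
  filter_upwards [hf, Submodule.span_le.2 h1 hg ε hε]
  rintro n hn ⟨x, hx, hxg⟩
  refine ⟨f + x, hball (by simpa using hx), ?_⟩
  rwa [map_add, hn, zero_add, hxg]

end Mixing

theorem lp_single_eq_smul {A : Type*} [DecidableEq A] {p : ℝ≥0∞} (u : A) (z : ℂ) :
    lp.single p u z = z • (lp.single p u 1 : lp (fun _ : A => ℂ) p) := by
  rw [← lp.single_smul, smul_eq_mul, mul_one]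

namespace DirTree
variable {A : Type*} [DecidableEq A] {T : DirTree A} {lam : A → ℂ} {p : ℝ≥0∞} [Fact (1 ≤ p)]
  {B : lp (fun _ : A => ℂ) p →L[ℂ] lp (fun _ : A => ℂ) p}

theorem dense_span_single (hp : p ≠ ∞) :
    Dense (Submodule.span ℂ (Set.range fun u : A => (lp.single p u 1 : lp (fun _ : A => ℂ) p)) :
      Set (lp (fun _ : A => ℂ) p)) := by
  intro f
  refine mem_closure_of_tendsto (lp.hasSum_single hp f) (Eventually.of_forall fun s => ?_)
  refine Submodule.sum_mem _ fun u _ => ?_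
  rw [lp_single_eq_smul]
  exact Submodule.smul_mem _ _ (Submodule.subset_span ⟨u, rfl⟩)

theorem IsWBS.norm_pow_apply_le (hB : T.IsWBS lam B) (hp : p ≠ ∞) {C : ℝ} {n : ℕ} {v : A}
    (hC : ∀ u ∈ T.chiIter n v, ‖T.wt lam n u‖ ≤ C) (hC0 : 0 ≤ C) (f : lp (fun _ : A => ℂ) p)
    (hf : Summable fun u => ‖(f : ∀ _ : A, ℂ) u‖) :
    ‖((B ^ n) f : ∀ _ : A, ℂ) v‖ ≤ C * ∑' u, ‖(f : ∀ _ : A, ℂ) u‖ := by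
  have hs := ((lp.hasSum_single hp f).mapL (B ^ n)).mapL (lp.evalCLM ℂ (fun _ : A => ℂ) p v)
  have hle : ∀ u, ‖lp.evalCLM ℂ (fun _ : A => ℂ) p v ((B ^ n) (lp.single p u (f u)))‖ ≤
      C * ‖(f : ∀ _ : A, ℂ) u‖ := by
    intro u
    rw [lp_single_eq_smul, map_smul, map_smul, norm_smul, mul_comm]
    refine mul_le_mul_of_nonneg_right ?_ (norm_nonneg _)
    change ‖((B ^ n) (lp.single p u 1) : ∀ _ : A, ℂ) v‖ ≤ C
    by_cases hu : u ∈ T.chiIter n v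
    · rw [hB.pow_single hu]
      simpa using hC u hu
    · rw [hB.pow_single_apply hu, norm_zero]
      exact hC0
  have := tsum_of_norm_bounded (hf.mul_left C).hasSum hle
  rwa [hs.tsum_eq, tsum_mul_left] at this

theorem IsWBS.not_hypercyclic_algebra (hB : T.IsWBS lam B) (hp : p ≠ ∞) {C : ℝ} {v : A}
    (hC : ∀ n : ℕ, ∀ u ∈ T.chiIter n v, ‖T.wt lam n u‖ ≤ C)
    {S : Set (lp (fun _ : A => ℂ) p)} {f : lp (fun _ : A => ℂ) p} (hfS : f ∈ S) (hf0 : f ≠ 0)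
    (hmul : ∀ f ∈ S, ∀ g ∈ S, ∃ h ∈ S, ∀ v : A,
      (h : ∀ _ : A, ℂ) v = (f : ∀ _ : A, ℂ) v * (g : ∀ _ : A, ℂ) v)
    (hdense : ∀ f ∈ S, f ≠ 0 → Dense (Set.range fun n : ℕ => (B ^ n) f)) : False := by
  have hp0 : 0 < p.toReal := ENNReal.toReal_pos (zero_lt_one.trans_le Fact.out).ne' hp
  have hpow : ∀ m : ℕ, ∃ h ∈ S, ∀ u, (h : ∀ _ : A, ℂ) u = (f : ∀ _ : A, ℂ) u ^ (m + 1) := by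
    intro m
    induction m with
    | zero => exact ⟨f, hfS, fun u => (pow_one _).symm⟩
    | succ m ih =>
      obtain ⟨h, hS, hh⟩ := ih
      obtain ⟨h', hS', hh'⟩ := hmul h hS f hfS
      exact ⟨h', hS', fun u => by rw [hh', hh, ← pow_succ]⟩
  obtain ⟨m, hm⟩ := exists_nat_ge p.toReal
  obtain ⟨h, hS, hh⟩ := hpow m
  have hsum : Summable fun u => ‖(h : ∀ _ : A, ℂ) u‖ := by
    refine Summable.of_nonneg_of_le (fun _ => norm_nonneg _) (fun u => ?_)
      (((lp.memℓp f).summable hp0).mul_left (‖f‖ ^ (m + 1 - p.toReal)))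
    rw [hh, norm_pow, ← Real.rpow_natCast]
    rcases (norm_nonneg ((f : ∀ _ : A, ℂ) u)).eq_or_lt with h0 | h0
    · rw [← h0, Real.zero_rpow (by positivity)]
      positivity
    · have hle := lp.norm_apply_le_norm (zero_lt_one.trans_le Fact.out : 0 < p).ne' f u
      have : ((m + 1 : ℕ) : ℝ) = (m + 1 - p.toReal) + p.toReal := by push_cast; ring
      rw [this, Real.rpow_add h0]
      refine mul_le_mul_of_nonneg_right ?_ (by positivity)
      exact Real.rpow_le_rpow h0.le hle (by linarith)
  have hne : h ≠ 0 := by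
    rintro rfl
    apply hf0
    ext u
    exact eq_zero_of_pow_eq_zero (n := m + 1) (hh u).symm
  have hC0 : 0 ≤ C := (norm_nonneg _).trans (hC 0 v rfl)
  have hbd := fun n => hB.norm_pow_apply_le hp (hC n) hC0 h hsum
  set M := C * ∑' u, ‖(h : ∀ _ : A, ℂ) u‖
  have hclosed : IsClosed {g : lp (fun _ : A => ℂ) p |
      ‖lp.evalCLM ℂ (fun _ : A => ℂ) p v g‖ ≤ M} :=
    isClosed_le (by fun_prop) continuous_const
  have hall : ∀ g : lp (fun _ : A => ℂ) p, ‖(g : ∀ _ : A, ℂ) v‖ ≤ M := fun g =>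
    closure_minimal (Set.range_subset_iff.2 hbd) hclosed (hdense h hS hne g)
  have hM := hall (lp.single p v ((|M| + 1 : ℝ) : ℂ))
  rw [lp.single_apply_self, Complex.norm_real, Real.norm_of_nonneg (by positivity)] at hM
  linarith [le_abs_self M]

end DirTree

namespace DirTree
variable {A : Type*} {T : DirTree A}

theorem IsWBS.single_mem_smallPreimages_of_card [DecidableEq A] {lam : A → ℂ} {p : ℝ≥0∞}
    [Fact (1 ≤ p)] {B : lp (fun _ : A => ℂ) p →L[ℂ] lp (fun _ : A => ℂ) p}
    (hB : T.IsWBS lam B) (hp : 1 < p.toReal) {v : A} {δ : ℂ} (hδ : δ ≠ 0)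
    (h : ∀ N : ℕ, ∀ᶠ n in atTop, ∃ F : Finset A, F.card = N + 1 ∧
      ∀ u ∈ F, u ∈ T.chiIter n v ∧ T.wt lam n u = δ) :
    lp.single p v 1 ∈ smallPreimages B := by
  intro ε hε
  have hp0 : 0 < p.toReal := by linarith
  have hlim : Tendsto (fun N : ℕ => ((N : ℝ) + 1) ^ (-(p.toReal - 1)) * ‖δ‖⁻¹ ^ p.toReal)
      atTop (𝓝 0) := by
    rw [← zero_mul (‖δ‖⁻¹ ^ p.toReal)]
    exact ((tendsto_rpow_neg_atTop (by linarith)).comp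
      (tendsto_atTop_add_const_right _ _ tendsto_natCast_atTop_atTop)).mul_const _
  obtain ⟨N, hN⟩ := (hlim.eventually (gt_mem_nhds (Real.rpow_pos_of_pos hε p.toReal))).exists
  filter_upwards [h N]
  rintro n ⟨F, hF, hFu⟩
  have hN0 : (0 : ℝ) < N + 1 := by positivity
  have hNc : (N : ℂ) + 1 ≠ 0 := by exact_mod_cast hN0.ne'
  refine ⟨∑ u ∈ F, lp.single p u (((N : ℂ) + 1)⁻¹ * δ⁻¹), ?_, ?_⟩
  · rw [← Real.rpow_lt_rpow_iff (norm_nonneg _) hε.le hp0,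
      lp.norm_sum_single hp0 (fun _ : A => ((N : ℂ) + 1)⁻¹ * δ⁻¹) F]
    refine lt_of_eq_of_lt ?_ hN
    have hnorm : ‖(N : ℂ) + 1‖ = N + 1 := by
      exact_mod_cast Complex.norm_natCast (N + 1)
    rw [Finset.sum_const, hF, nsmul_eq_mul, norm_mul, norm_inv, norm_inv, hnorm,
      Real.mul_rpow (by positivity) (by positivity), ← mul_assoc, Real.inv_rpow hN0.le,
      ← Real.rpow_neg hN0.le, neg_sub, sub_eq_add_neg, Real.rpow_add hN0, Real.rpow_one]
    push_cast
    rfl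
  · have : ∀ u ∈ F, (B ^ n) (lp.single p u (((N : ℂ) + 1)⁻¹ * δ⁻¹)) =
        ((N : ℂ) + 1)⁻¹ • (lp.single p v 1 : lp (fun _ : A => ℂ) p) := by
      intro u hu
      rw [lp_single_eq_smul, map_smul, hB.pow_single (hFu u hu).1, (hFu u hu).2, smul_smul,
        inv_mul_cancel_right₀ hδ]
    rw [map_sum, Finset.sum_congr rfl this, Finset.sum_const, hF, ← Nat.cast_smul_eq_nsmul ℂ,
      smul_smul, Nat.cast_add_one, mul_inv_cancel₀ hNc, one_smul]

theorem IsWBS.single_mem_smallPreimages_of_two_pow [DecidableEq A] {lam : A → ℂ} {p : ℝ≥0∞}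
    [Fact (1 ≤ p)] {B : lp (fun _ : A => ℂ) p →L[ℂ] lp (fun _ : A => ℂ) p}
    (hB : T.IsWBS lam B) {v : A}
    (h : ∀ n, ∃ u ∈ T.chiIter n v, T.wt lam n u = 2 ^ n) :
    lp.single p v 1 ∈ smallPreimages B := by
  intro ε hε
  have hlim := tendsto_pow_atTop_nhds_zero_of_lt_one (r := (2 : ℝ)⁻¹) (by norm_num) (by norm_num)
  filter_upwards [hlim.eventually (gt_mem_nhds hε)] with n hn
  obtain ⟨u, hu, hwt⟩ := h n
  refine ⟨((2 : ℂ) ^ n)⁻¹ • lp.single p u 1, ?_, ?_⟩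
  · rw [norm_smul, lp.norm_single (zero_lt_one.trans_le Fact.out)]
    simpa using hn
  · rw [map_smul, hB.pow_single hu, hwt, smul_smul, inv_mul_cancel₀ (pow_ne_zero n two_ne_zero), one_smul]

theorem IsWBS.single_mem_smallPreimages_of_mem [DecidableEq A] {lam : A → ℂ} {p : ℝ≥0∞}
    [Fact (1 ≤ p)] {B : lp (fun _ : A => ℂ) p →L[ℂ] lp (fun _ : A => ℂ) p}
    (hB : T.IsWBS lam B) (hlam : ∀ u, lam u ≠ 0) {k : ℕ} {v w : A} (hw : w ∈ T.chiIter k v)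
    (h : lp.single p w 1 ∈ smallPreimages B) : lp.single p v 1 ∈ smallPreimages B := by
  have h1 := pow_apply_mem_smallPreimages h k
  rw [hB.pow_single hw] at h1
  exact ((smallPreimages B).smul_mem_iff (T.wt_ne_zero hlam k w)).1 h1

/-- Selecting two distinct children whenever possible, the selected descendants of a fertile
vertex become arbitrarily numerous. -/
theorem eventually_exists_finset_card {c d : A → A} (hc : ∀ w, c w ∈ T.chi w)
    (hcd : ∀ w, ∀ u ∈ T.chi w, u ≠ c w → d w ∈ T.chi w ∧ d w ≠ c w) {v : A}
    (hfert : ∀ k, ∀ w ∈ T.chiIter k v,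
      Tendsto (fun n : ℕ => (T.chiIter n w).encard) atTop (𝓝 ⊤))
    {R : ℕ → A → Prop} (hR0 : R 0 v) (hRc : ∀ m w, R m w → R (m + 1) (c w))
    (hRd : ∀ m w, R m w → R (m + 1) (d w)) (hRmem : ∀ m w, R m w → w ∈ T.chiIter m v) (N : ℕ) :
    ∀ᶠ m in atTop, ∃ F : Finset A, F.card = N + 1 ∧ ∀ u ∈ F, R m u := by
  classical
  have hinj : Function.Injective c := fun x y hxy => by
    rw [← (hc x).2, ← (hc y).2, hxy]
  have hRck : ∀ k m w, R m w → R (m + k) (c^[k] w) := by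
    intro k m w hw
    induction k with
    | zero => exact hw
    | succ k ih =>
      rw [Function.iterate_succ_apply']
      exact hRc _ _ ih
  have hbranch : ∀ m w, w ∈ T.chiIter m v → ∃ k, d (c^[k] w) ∈ T.chi (c^[k] w) ∧
      d (c^[k] w) ≠ c (c^[k] w) := by
    intro m w hw
    by_contra! hno
    have hsub : ∀ k, T.chiIter k w ⊆ {c^[k] w} := by
      intro k
      induction k with
      | zero => exact subset_rfl
      | succ k ih =>
        intro u hu
        obtain ⟨hu, hpar⟩ := T.mem_chiIter_succ.1 hu
        rw [Function.iterate_succ_apply', Set.mem_singleton_iff]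
        by_contra hne
        have h := hcd (c^[k] w) u ⟨hu, ih hpar⟩ hne
        exact h.2 (hno k h.1)
    obtain ⟨n, hn⟩ := ((hfert m w hw).eventually (lt_mem_nhds (ENat.one_lt_top))).exists
    exact absurd ((Set.encard_le_encard (hsub n)).trans (Set.encard_singleton _).le) hn.not_ge
  have hex : ∃ m, ∃ F : Finset A, F.card = N + 1 ∧ ∀ u ∈ F, R m u := by
    induction N with
    | zero => exact ⟨0, {v}, rfl, by simpa using hR0⟩
    | succ N ih =>
      obtain ⟨m, F, hF, hFR⟩ := ih
      obtain ⟨w, hw⟩ := Finset.card_pos.1 (by omega : 0 < F.card)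
      obtain ⟨k, hk, hne⟩ := hbranch m w (hRmem m w (hFR w hw))
      refine ⟨m + k + 1, insert (d (c^[k] w)) (F.image c^[k + 1]), ?_, ?_⟩
      · rw [Finset.card_insert_of_notMem, Finset.card_image_of_injective _ (hinj.iterate _), hF]
        intro hmem
        obtain ⟨y, -, hy⟩ := Finset.mem_image.1 hmem
        rw [Function.iterate_succ_apply'] at hy
        have : c^[k] y = c^[k] w := by rw [← (hc (c^[k] y)).2, hy, hk.2]
        exact hne (by rw [← hy, this])
      · intro u hu
        rcases Finset.mem_insert.1 hu with rfl | hu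
        · exact hRd _ _ (hRck k m w (hFR w hw))
        · obtain ⟨y, hy, rfl⟩ := Finset.mem_image.1 hu
          exact hRck (k + 1) m y (hFR y hy)
  obtain ⟨m, F, hF, hFR⟩ := hex
  filter_upwards [eventually_ge_atTop m] with n hn
  obtain ⟨k, rfl⟩ := Nat.exists_eq_add_of_le hn
  refine ⟨F.image c^[k], by rw [Finset.card_image_of_injective _ (hinj.iterate _), hF], ?_⟩
  intro u hu
  obtain ⟨y, hy, rfl⟩ := Finset.mem_image.1 hu
  exact hRck k m y (hFR y hy)

end DirTree

namespace DirTree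
variable {A : Type*} {T : DirTree A}

/-- Every vertex keeps two large children (one if it has only one); the other children get
summable weights `s`. Below `v₀` the large weights are `2`, truncated so that the products
starting at `v₀` stay bounded. -/
theorem exists_weight (c d : A → A) (v₀ : A) {s : A → ℝ} (hs : ∀ u, 0 < s u ∧ s u ≤ 1) :
    ∃ l a : A → ℝ, (∀ u, 0 < l u ∧ l u ≤ 2) ∧ (∀ u, 0 < a u ∧ a u ≤ 1) ∧
      (∀ u, u ≠ c (T.par u) → u ≠ d (T.par u) → l u = s u) ∧
      (∀ n, ∀ u ∈ T.chiIter (n + 1) v₀, a u = l u * a (T.par u)) ∧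
      (∀ n, ∀ u ∈ T.chiIter (n + 1) v₀, u = c (T.par u) ∨ u = d (T.par u) →
        a u = min 1 (2 * a (T.par u))) ∧
      (∀ u, (∀ n, u ∉ T.chiIter (n + 1) v₀) → u = c (T.par u) → l u = 2) := by
  classical
  let S : Set A := {u | ∃ n, u ∈ T.chiIter (n + 1) v₀}
  let big : Set A := {u | u = c (T.par u) ∨ u = d (T.par u)}
  let L : A → ℝ → ℝ := fun u x =>
    if u ∈ big then (if u ∈ S then min 2 x⁻¹ else 2) else s u
  have hroot : T.root ∉ S := fun ⟨n, hn⟩ => (T.mem_chiIter_succ.1 hn).1 rfl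
  obtain ⟨a, ha0, ha⟩ := T.exists_recursion 1 fun u x => if u ∈ S then L u x * x else 1
  have hLpos : ∀ u x, 0 < x → 0 < L u x := by
    intro u x hx
    simp only [L]
    split_ifs
    · positivity
    · norm_num
    · exact (hs u).1
  have hLle : ∀ u x, L u x ≤ 2 := by
    intro u x
    simp only [L]
    split_ifs
    · exact min_le_left _ _
    · exact le_rfl
    · linarith [(hs u).2]
  have hbig : ∀ u ∈ S, u ∈ big → ∀ x, 0 < x → L u x * x = min 1 (2 * x) := by
    intro u hu hb x hx
    simp only [L, if_pos hu, if_pos hb]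
    rw [min_mul_of_nonneg _ _ hx.le, inv_mul_cancel₀ hx.ne', min_comm]
  have haS : ∀ u ∈ S, a u = L u (a (T.par u)) * a (T.par u) := by
    intro u hu
    rw [ha u fun h => hroot (h ▸ hu), if_pos hu]
  have hapos : ∀ u, 0 < a u ∧ a u ≤ 1 := by
    intro u
    induction u using T.induction_par with
    | h0 => simp [ha0]
    | h u hu ih =>
      by_cases hS : u ∈ S
      · rw [haS u hS]
        refine ⟨mul_pos (hLpos _ _ ih.1) ih.1, ?_⟩
        by_cases hb : u ∈ big
        · rw [hbig u hS hb _ ih.1]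
          exact min_le_left _ _
        · simp only [L, if_neg hb]
          exact mul_le_one₀ (hs u).2 ih.1.le ih.2
      · rw [ha u hu, if_neg hS]
        norm_num
  refine ⟨fun u => L u (a (T.par u)), a, fun u => ⟨hLpos _ _ (hapos _).1, hLle _ _⟩, hapos,
    fun u hc hd => if_neg (not_or.2 ⟨hc, hd⟩), fun n u hu => haS u ⟨n, hu⟩,
    fun n u hu hb => ?_, fun u hu hc => ?_⟩
  · rw [haS u ⟨n, hu⟩, hbig u ⟨n, hu⟩ hb _ (hapos _).1]
  · have hb : u ∈ big := Or.inl hc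
    have hS : u ∉ S := fun ⟨n, hn⟩ => hu n hn
    simp only [L, if_pos hb, if_neg hS]

theorem summable_rpow_chi {l s : A → ℝ} {c d : A → A} {q S : ℝ} (hq : 1 ≤ q)
    (hl : ∀ u, 0 < l u ∧ l u ≤ 2) (hs : ∀ u, 0 < s u ∧ s u ≤ 1) (hS : HasSum s S)
    (hls : ∀ u, u ≠ c (T.par u) → u ≠ d (T.par u) → l u = s u) (v : A) :
    Summable (fun u : T.chi v => l u ^ q) ∧ ∑' u : T.chi v, l u ^ q ≤ 2 ^ q + 2 ^ q + S := by
  classical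
  let g : A → ℝ := fun u => Pi.single (M := fun _ => ℝ) (c v) (2 ^ q) u +
    Pi.single (M := fun _ => ℝ) (d v) (2 ^ q) u + s u
  have hg : HasSum g (2 ^ q + 2 ^ q + S) :=
    ((hasSum_pi_single _ _).add (hasSum_pi_single _ _)).add hS
  have h2 : (0 : ℝ) < 2 ^ q := by positivity
  have hnn : ∀ w u : A, (0 : ℝ) ≤ Pi.single (M := fun _ => ℝ) w (2 ^ q) u := fun w u =>
    (Pi.single_nonneg (α := fun _ : A => ℝ) (i := w)).2 h2.le u
  have hg0 : ∀ u, 0 ≤ g u := fun u =>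
    add_nonneg (add_nonneg (hnn _ _) (hnn _ _)) (hs u).1.le
  have hle : ∀ u : T.chi v, l u ^ q ≤ g u := by
    rintro ⟨u, hu, rfl⟩
    have hl2 : l u ^ q ≤ 2 ^ q := Real.rpow_le_rpow (hl u).1.le (hl u).2 (by linarith)
    have hs0 := (hs u).1.le
    by_cases hc : u = c (T.par u)
    · have : Pi.single (M := fun _ => ℝ) (c (T.par u)) (2 ^ q) u = 2 ^ q := by
        rw [← hc, Pi.single_eq_same]
      have := hnn (d (T.par u)) u
      simp only [g]
      linarith
    by_cases hd : u = d (T.par u)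
    · have : Pi.single (M := fun _ => ℝ) (d (T.par u)) (2 ^ q) u = 2 ^ q := by
        rw [← hd, Pi.single_eq_same]
      have := hnn (c (T.par u)) u
      simp only [g]
      linarith
    have h1 : l u ^ q ≤ s u := by
      rw [hls u hc hd]
      exact Real.rpow_le_self_of_le_one (hs u).1.le (hs u).2 hq
    have := hnn (c (T.par u)) u
    have := hnn (d (T.par u)) u
    simp only [g]
    linarith
  have hsub : Summable fun u : T.chi v => g u := hg.summable.subtype _
  have hsum := Summable.of_nonneg_of_le
    (fun u : T.chi v => Real.rpow_nonneg (hl u).1.le q) hle hsub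
  exact ⟨hsum, (hsum.tsum_le_tsum hle hsub).trans
    ((hg.summable.tsum_subtype_le _ _ hg0).trans_eq hg.tsum_eq)⟩

theorem wt_mul_eq {v₀ : A} {l a : A → ℝ}
    (hal : ∀ n, ∀ u ∈ T.chiIter (n + 1) v₀, a u = l u * a (T.par u)) {k n : ℕ} {u v : A}
    (hv : v ∈ T.chiIter k v₀) (hu : u ∈ T.chiIter n v) :
    T.wt (fun w => (l w : ℂ)) n u * a v = a u := by
  induction n generalizing u with
  | zero => simp [wt, Set.mem_singleton_iff.1 hu]
  | succ n ih =>
    have h1 := hal (k + n) u (T.mem_chiIter_add (n := n + 1) hv hu)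
    rw [wt_succ, mul_right_comm, ih (T.mem_chiIter_succ.1 hu).2, h1]
    push_cast
    ring

end DirTree

/-- Let `A` be a rooted leafless directed tree containing a fertile
vertex `v₀` (i.e. `|Chi^n(v)| → ∞` for every descendant `v` of `v₀`). Then for every
`1 < p < ∞` there is a weight `λ` with `0 < |λ_v| ≤ 2` inducing a bounded weighted
backward shift `B` on `ℓ^p(A)` which is (topologically) mixing, while
`sup_n sup_{u ∈ Chi^n(v₀)} |λ(v₀→u)| < ∞`; consequently `B` has no hypercyclic algebra
for the coordinatewise product. -/
theorem stmt19 {A : Type*} [Countable A] (T : DirTree A)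
    (hleaf : ∀ v : A, (T.chi v).Nonempty)
    (v₀ : A)
    (hfert : ∀ v : A, (∃ n : ℕ, 0 < n ∧ v ∈ T.chiIter n v₀) →
      Tendsto (fun n : ℕ => (T.chiIter n v).encard) atTop (𝓝 ⊤))
    (p : ℝ≥0∞) [Fact (1 ≤ p)] (hp1 : 1 < p) (hp2 : p ≠ ∞) :
    ∃ lam : A → ℂ, (∀ v, 0 < ‖lam v‖ ∧ ‖lam v‖ ≤ 2) ∧
      ∃ B : lp (fun _ : A => ℂ) p →L[ℂ] lp (fun _ : A => ℂ) p,
        T.IsWBS lam B ∧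
        (∀ U V : Set (lp (fun _ : A => ℂ) p),
          IsOpen U → U.Nonempty → IsOpen V → V.Nonempty →
          ∃ N : ℕ, ∀ n : ℕ, N ≤ n → ∃ f ∈ U, (B ^ n) f ∈ V) ∧
        (∃ C : ℝ, ∀ n : ℕ, ∀ u ∈ T.chiIter n v₀, ‖T.wt lam n u‖ ≤ C) ∧
        ¬ ∃ S : Set (lp (fun _ : A => ℂ) p),
            (∃ f ∈ S, f ≠ 0) ∧
            (∀ f ∈ S, ∀ g ∈ S, f + g ∈ S) ∧
            (∀ c : ℂ, ∀ f ∈ S, c • f ∈ S) ∧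
            (∀ f ∈ S, ∀ g ∈ S, ∃ h ∈ S, ∀ v : A,
              (h : ∀ _ : A, ℂ) v = (f : ∀ _ : A, ℂ) v * (g : ∀ _ : A, ℂ) v) ∧
            (∀ f ∈ S, f ≠ 0 → Dense (Set.range fun n : ℕ => (B ^ n) f)) := by
  classical
  obtain ⟨s, hs0, S, hS, hS1⟩ : ∃ s : A → ℝ, (∀ u, 0 < s u) ∧ ∃ S, HasSum s S ∧ S ≤ 1 := by
    have := Encodable.ofCountable A
    obtain ⟨s, hs⟩ := posSumOfEncodable one_pos A
    exact ⟨s, hs⟩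
  have hs : ∀ u, 0 < s u ∧ s u ≤ 1 := fun u =>
    ⟨hs0 u, (le_hasSum hS u fun w _ => (hs0 w).le).trans hS1⟩
  choose c hc using hleaf
  have hd' : ∀ w, ∃ d ∈ T.chi w, ∀ u ∈ T.chi w, u ≠ c w → d ≠ c w := by
    intro w
    by_cases h : ∃ u ∈ T.chi w, u ≠ c w
    · obtain ⟨u, hu, hne⟩ := h
      exact ⟨u, hu, fun _ _ _ => hne⟩
    · exact ⟨c w, hc w, fun u hu hne => absurd ⟨u, hu, hne⟩ h⟩
  choose d hd hcd using hd'
  obtain ⟨l, a, hl, ha, hls, hal, hbig, hl2⟩ := DirTree.exists_weight (T := T) c d v₀ hs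
  have hp : 1 < p.toReal := by
    simpa using (ENNReal.toReal_lt_toReal ENNReal.one_ne_top hp2).2 hp1
  have hpq := Real.HolderConjugate.conjExponent hp
  have hnorm : ∀ u, ‖(l u : ℂ)‖ = l u := fun u => Complex.norm_of_nonneg (hl u).1.le
  have hne : ∀ u, (l u : ℂ) ≠ 0 := fun u => Complex.ofReal_ne_zero.2 (hl u).1.ne'
  obtain ⟨B, hB⟩ := T.exists_isWBS (p := p) (lam := fun u => (l u : ℂ)) hpq fun v => by
    simpa only [hnorm] using DirTree.summable_rpow_chi hpq.symm.lt.le hl hs hS hls v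
  have hfertile : ∀ k, ∀ v ∈ T.chiIter (k + 1) v₀, lp.single p v 1 ∈ smallPreimages B := by
    intro k v hv
    refine hB.single_mem_smallPreimages_of_card hp (δ := ((a v)⁻¹ : ℝ))
      (Complex.ofReal_ne_zero.2 (inv_ne_zero (ha v).1.ne')) fun N => ?_
    have hstep : ∀ m w u, u ∈ T.chi w → u = c w ∨ u = d w →
        w ∈ T.chiIter m v ∧ a w = min 1 (2 ^ m * a v) →
        u ∈ T.chiIter (m + 1) v ∧ a u = min 1 (2 ^ (m + 1) * a v) := by
      rintro m w u ⟨hu, rfl⟩ hcd ⟨hw, haw⟩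
      have hmem : u ∈ T.chiIter (m + 1) v := T.mem_chiIter_succ.2 ⟨hu, hw⟩
      refine ⟨hmem, ?_⟩
      rw [hbig (k + 1 + m) u (T.mem_chiIter_add (n := m + 1) hv hmem) hcd, haw, pow_succ]
      rcases le_total 1 (2 ^ m * a v) with h | h
      · rw [min_eq_left h, min_eq_left (by norm_num), min_eq_left (by linarith)]
      · rw [min_eq_right h]
        ring_nf
    have hcard := DirTree.eventually_exists_finset_card hc
      (fun w u hu hne => ⟨hd w, hcd w u hu hne⟩)
      (fun j w hw => hfert w ⟨k + 1 + j, by omega, T.mem_chiIter_add hv hw⟩)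
      (R := fun m w => w ∈ T.chiIter m v ∧ a w = min 1 (2 ^ m * a v))
      ⟨rfl, by simp [(ha v).2]⟩ (fun m w => hstep m w _ (hc w) (Or.inl rfl))
      (fun m w => hstep m w _ (hd w) (Or.inr rfl)) (fun _ _ h => h.1) N
    have hlarge : ∀ᶠ m : ℕ in atTop, 1 ≤ 2 ^ m * a v :=
      ((tendsto_pow_atTop_atTop_of_one_lt one_lt_two).atTop_mul_const
        (ha v).1).eventually_ge_atTop 1
    filter_upwards [hcard, hlarge]
    rintro m ⟨F, hF, hFR⟩ hm
    refine ⟨F, hF, fun u hu => ⟨(hFR u hu).1, ?_⟩⟩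
    have h1 := DirTree.wt_mul_eq hal hv (hFR u hu).1
    rw [(hFR u hu).2, min_eq_left hm] at h1
    rw [Complex.ofReal_inv]
    exact eq_inv_of_mul_eq_one_left (by simpa using h1)
  have hsmall : ∀ v, lp.single p v 1 ∈ smallPreimages B := by
    intro v
    by_cases h : ∃ j k w, w ∈ T.chiIter j v ∧ w ∈ T.chiIter (k + 1) v₀
    · obtain ⟨j, k, w, hw, hw'⟩ := h
      exact hB.single_mem_smallPreimages_of_mem hne hw (hfertile k w hw')
    · have hpath : ∀ n, c^[n] v ∈ T.chiIter n v ∧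
          T.wt (fun u => (l u : ℂ)) n (c^[n] v) = 2 ^ n := by
        intro n
        induction n with
        | zero => exact ⟨rfl, by simp [DirTree.wt]⟩
        | succ n ih =>
          rw [Function.iterate_succ_apply']
          have hpar := (hc (c^[n] v)).2
          have hmem : c (c^[n] v) ∈ T.chiIter (n + 1) v :=
            T.mem_chiIter_succ.2 ⟨(hc _).1, hpar.symm ▸ ih.1⟩
          refine ⟨hmem, ?_⟩
          rw [T.wt_succ, hpar, ih.2,
            hl2 _ (fun k hk => h ⟨n + 1, k, _, hmem, hk⟩) (by rw [hpar]), pow_succ]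
          norm_num
      exact hB.single_mem_smallPreimages_of_two_pow fun n => ⟨_, hpath n⟩
  have hC : ∀ n : ℕ, ∀ u ∈ T.chiIter n v₀, ‖T.wt (fun u => (l u : ℂ)) n u‖ ≤ (a v₀)⁻¹ := by
    intro n u hu
    have h1 := congrArg norm (DirTree.wt_mul_eq hal (k := 0) rfl hu)
    rw [norm_mul, Complex.norm_of_nonneg (ha v₀).1.le, Complex.norm_of_nonneg (ha u).1.le] at h1
    rw [← one_div, le_div_iff₀ (ha v₀).1, h1]
    exact (ha u).2
  refine ⟨fun u => (l u : ℂ), fun u => by simpa only [hnorm] using hl u, B, hB, ?_, ⟨_, hC⟩, ?_⟩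
  · intro U V hU hU' hV hV'
    refine mixing_of_dense_span (DirTree.dense_span_single hp2) ?_ ?_ hU hU' hV hV'
    · rintro _ ⟨u, rfl⟩
      exact hB.eventually_pow_single u
    · rintro _ ⟨u, rfl⟩
      exact hsmall u
  · rintro ⟨S, ⟨f, hfS, hf0⟩, -, -, hmul, hdense⟩
    exact hB.not_hypercyclic_algebra hp2 hC hfS hf0 hmul hdense
end
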